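/- Let n ≥ 2, let λ ∈ ℝ^n satisfy λ_1 ≥ … ≥ λ_n and λ_1+…+λ_n = 0, and let r ≥ 1 be an integer. Then the r-th partial convex hull C_r(O_λ) is a convex set if and only if the r-fold Minkowski sum O_λ + O_λ + … + O_λ (r summands) is a convex set. -/

import Mathlib

/-- The `r`-th partial convex hull of a set `X`: the union of the convex hulls of all
`r`-tuples of points of `X`. -/
def partialConvexHull {E : Type*} [AddCommGroup E] [Module ℝ E]
    (r : ℕ) (X : Set E) : Set E :=
  {y | ∃ f : Fin r → E, (∀ i, f i ∈ X) ∧ y ∈ convexHull ℝ (Set.range f)}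

/-- The coadjoint orbit `O_λ` of `SU(n)`: the set of `n × n` complex Hermitian matrices
of trace zero whose eigenvalues, listed with multiplicity, are the entries of `lam`. -/
def coadjointOrbit {n : ℕ} (lam : Fin n → ℝ) : Set (Matrix (Fin n) (Fin n) ℂ) :=
  {A | A.trace = 0 ∧ ∃ hA : A.IsHermitian, ∃ σ : Equiv.Perm (Fin n),
      ∀ i, hA.eigenvalues (σ i) = lam i}

/-!
By compactness and Kempf–Ness, a family of Hermitian matrices with prescribed spectra and zero sum
exists iff generic flags, weighted by the gaps of the spectra, satisfy King's slope inequalities.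
Over `ℂ` a field automorphism carries flags with algebraically independent entries to flags
arbitrarily close to any prescribed ones, so one fixed configuration of flags tests all spectra at
once. The slope inequalities are linear in the gaps, hence the solvable families of spectra form a
convex set. Fix the spectrum `ν` of `-∑ i, t i • A i` with all `A i` in `O_λ`: the set of weights
`t` for which `ν` and the `t i • λ` are solvable is convex and permutation invariant, so it contains
the average of the cyclic shifts of `t`. This replaces the weights by `1 / r`, and therefore
`C_r(O_λ) = (1 / r) • (O_λ + ⋯ + O_λ)`.
-/

open Matrix Filter Topology
open scoped ComplexOrder MatrixOrder

section FieldAutomorphisms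

variable {K L : Type*} [Field K] [Field L] [Algebra K L]

theorem exists_transcendental_of_countable [Countable K] [Uncountable L] :
    ∃ z : L, Transcendental K z := by
  by_contra! h
  have hall : {x : L | IsAlgebraic K x} = Set.univ :=
    Set.eq_univ_of_forall fun z => not_not.1 (h z)
  exact Set.not_countable_univ (hall ▸ Algebraic.countable K L)

theorem exists_mvPolynomial_algEquiv_affine {ι : Type*} (i : ι) (a : K) {b : K} (hb : b ≠ 0) :
    ∃ e : MvPolynomial ι K ≃ₐ[K] MvPolynomial ι K,
      e (.X i) = .C a + .C b * .X i := by
  classical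
  let f : ι → MvPolynomial ι K := Function.update .X i (.C a + .C b * .X i)
  let g : ι → MvPolynomial ι K := Function.update .X i (.C b⁻¹ * (.X i - .C a))
  have hC : (.C b * .C b⁻¹ : MvPolynomial ι K) = 1 := by
    rw [← MvPolynomial.C_mul, mul_inv_cancel₀ hb, MvPolynomial.C_1]
  have hfg : (MvPolynomial.aeval f).comp (MvPolynomial.aeval g) = AlgHom.id K _ := by
    refine MvPolynomial.algHom_ext fun j => ?_
    obtain rfl | hj := eq_or_ne j i
    · simp only [AlgHom.comp_apply, MvPolynomial.aeval_X, g, f, Function.update_self, map_mul,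
        map_sub, MvPolynomial.algHom_C, AlgHom.id_apply, MvPolynomial.algebraMap_eq]
      linear_combination MvPolynomial.X j * hC
    · simp [g, f, Function.update_of_ne hj]
  have hgf : (MvPolynomial.aeval g).comp (MvPolynomial.aeval f) = AlgHom.id K _ := by
    refine MvPolynomial.algHom_ext fun j => ?_
    obtain rfl | hj := eq_or_ne j i
    · simp only [AlgHom.comp_apply, MvPolynomial.aeval_X, g, f, Function.update_self, map_mul,
        map_add, MvPolynomial.algHom_C, AlgHom.id_apply, MvPolynomial.algebraMap_eq]
      linear_combination (MvPolynomial.X j - MvPolynomial.C a) * hC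
    · simp [g, f, Function.update_of_ne hj]
  exact ⟨AlgEquiv.ofAlgHom _ _ hfg hgf, by simp [f]⟩

theorem exists_algEquiv_apply_eq_affine [IsAlgClosed L] {z : L}
    (hz : Transcendental K z) (a : K) {b : K} (hb : b ≠ 0) :
    ∃ τ : L ≃ₐ[K] L, τ z = algebraMap K L a + algebraMap K L b * z := by
  have hindep : AlgebraicIndepOn K id ({z} : Set L) :=
    (algebraicIndependent_singleton_iff (ι := ({z} : Set L)) ⟨z, rfl⟩).2 hz
  obtain ⟨t, hzt, ht⟩ := exists_isTranscendenceBasis_superset hindep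
  obtain ⟨e, he⟩ := exists_mvPolynomial_algEquiv_affine (⟨z, hzt rfl⟩ : t) a hb
  let φ := ht.1.aevalEquiv
  let E := φ.symm.trans (e.trans φ)
  have := IsAlgClosed.isAlgClosure_of_transcendence_basis _ ht
  let τ : L ≃+* L := IsAlgClosure.equivOfEquiv L L E.toRingEquiv
  have hφ (p) : (φ p : L) = MvPolynomial.aeval (↑) p := ht.1.algebraMap_aevalEquiv p
  have hτ (p) : τ (φ p : L) = φ (e p) := by
    simpa [E] using IsAlgClosure.equivOfEquiv_algebraMap L L E.toRingEquiv (φ p)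
  refine ⟨AlgEquiv.ofRingEquiv (f := τ) fun x => ?_, ?_⟩
  · have he' : e (.C x) = .C x := e.commutes x
    simpa [hφ, he'] using hτ (.C x)
  · simpa [hφ, he] using hτ (.X ⟨z, hzt rfl⟩)

-- Take `z` transcendental over the field generated by the entries of `u` and `v`, and look at the
-- conjugates of the point with parameter `z` on the line through `u` and `v`.
theorem exists_mem_closure_ringEquiv_comp {X : Type*} [Countable X] (u v : X → ℂ) :
    ∃ w : X → ℂ, u ∈ closure (Set.range fun τ : ℂ ≃+* ℂ => τ ∘ w) ∧
      v ∈ closure (Set.range fun τ : ℂ ≃+* ℂ => τ ∘ w) := by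
  let S := Set.range u ∪ Set.range v
  let K := Subfield.closure S
  have : Countable K := Cardinal.mk_le_aleph0_iff.1 <| (Subfield.cardinalMk_closure_le_max S).trans
    (max_le ((Set.countable_range u).union (Set.countable_range v)).le_aleph0 le_rfl)
  have : Uncountable ℂ := ⟨fun _ => not_countable_complex Set.countable_univ⟩
  obtain ⟨z, hz⟩ := exists_transcendental_of_countable (K := K) (L := ℂ)
  have hclosure (a : K) : (fun x => u x + a * (v x - u x)) ∈ closure
      (Set.range fun τ : ℂ ≃+* ℂ => τ ∘ fun x => u x + z * (v x - u x)) := by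
    have hb (k : ℕ) : ((k : K) + 1)⁻¹ ≠ 0 := inv_ne_zero (Nat.cast_add_one_ne_zero k)
    choose τ hτ using fun k => exists_algEquiv_apply_eq_affine hz a (hb k)
    have hlim : Tendsto (fun k => τ k z) atTop (𝓝 a) := by
      have hK (b : K) : algebraMap K ℂ b = b := rfl
      simpa [hτ, hK] using
        (tendsto_one_div_add_atTop_nhds_zero_nat (𝕜 := ℂ)).mul_const z |>.const_add (a : ℂ)
    refine mem_closure_of_tendsto (f := fun k x => u x + τ k z * (v x - u x)) (b := atTop)
      (tendsto_pi_nhds.2 fun x => (hlim.mul_const _).const_add _)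
      (Eventually.of_forall fun k => ⟨(τ k).toRingEquiv, funext fun x => ?_⟩)
    have hu : τ k (u x) = u x := (τ k).commutes ⟨u x, Subfield.subset_closure (.inl ⟨x, rfl⟩)⟩
    have hv : τ k (v x) = v x := (τ k).commutes ⟨v x, Subfield.subset_closure (.inr ⟨x, rfl⟩)⟩
    simp [hu, hv]
  exact ⟨_, by simpa using hclosure 0, by simpa using hclosure 1⟩

end FieldAutomorphisms

section Rank

variable {K L m n : Type*} [Field K] [Field L] [Fintype n]

theorem exists_rank_factorization (A : Matrix m n K) :
    ∃ (B : Matrix m (Fin A.rank) K) (C : Matrix (Fin A.rank) n K) (V : Matrix n (Fin A.rank) K),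
      A = B * C ∧ B = A * V ∧ Function.Injective B.mulVec := by
  classical
  let b := Module.finBasisOfFinrankEq K (LinearMap.range A.mulVecLin) rfl
  choose V hV using fun l => (b l).2
  have hmem (j : n) : A.col j ∈ LinearMap.range A.mulVecLin := ⟨Pi.single j 1, by simp⟩
  let B : Matrix m (Fin A.rank) K := of fun i l => (b l : m → K) i
  refine ⟨B, of fun l j => b.repr ⟨A.col j, hmem j⟩ l, of fun j l => V l j, ?_, ?_, ?_⟩
  · ext i j
    have hrepr := congrFun (congrArg Subtype.val (b.sum_repr ⟨A.col j, hmem j⟩)) i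
    simp only [Submodule.coe_sum, Submodule.coe_smul, Finset.sum_apply, Pi.smul_apply, col_apply,
      smul_eq_mul] at hrepr
    rw [← hrepr, mul_apply]
    exact Finset.sum_congr rfl fun l _ => mul_comm _ _
  · ext i l
    exact (congrFun (hV l) i).symm
  · rw [mulVec_injective_iff]
    exact b.linearIndependent.map' (Submodule.subtype _) (Submodule.ker_subtype _)

theorem rank_map_ringHom_le (A : Matrix m n K) (f : K →+* L) : (A.map f).rank ≤ A.rank := by
  obtain ⟨B, C, -, hA, -, -⟩ := exists_rank_factorization A
  rw [hA, Matrix.map_mul, ← hA]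
  exact (rank_mul_le_left _ _).trans ((rank_le_card_width _).trans_eq (Fintype.card_fin _))

theorem rank_map_ringEquiv (A : Matrix m n K) (τ : K ≃+* L) : (A.map τ).rank = A.rank := by
  refine (rank_map_ringHom_le A (τ : K →+* L)).antisymm ?_
  simpa [Matrix.map_map, Function.comp_def] using rank_map_ringHom_le (A.map τ) (τ.symm : L →+* K)

end Rank

section StarProjection

variable {𝕜 n m : Type*} [RCLike 𝕜]

theorem isCompact_setOf_norm_apply_le (C : ℝ) :
    IsCompact {A : Matrix n m 𝕜 | ∀ i j, ‖A i j‖ ≤ C} := by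
  have h : IsCompact
      (Set.univ.pi fun _ : n => Set.univ.pi fun _ : m => Metric.closedBall (0 : 𝕜) C) :=
    isCompact_univ_pi fun _ => isCompact_univ_pi fun _ => isCompact_closedBall 0 C
  simp only [Set.pi, Set.mem_univ, forall_const, mem_closedBall_zero_iff, Set.mem_ofPred_eq] at h
  exact h

variable [Fintype n] [Fintype m]

theorem isCompact_unitaryGroup [DecidableEq n] :
    IsCompact (unitaryGroup n 𝕜 : Set (Matrix n n 𝕜)) := by
  refine (isCompact_setOf_norm_apply_le 1).of_isClosed_subset isClosed_unitary fun U hU i j => ?_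
  exact entry_norm_bound_of_unitary hU i j

theorem norm_apply_le_one_of_isStarProjection {P : Matrix n n 𝕜} (hP : IsStarProjection P)
    (i j : n) : ‖P i j‖ ≤ 1 := by
  classical
  have hU := entry_norm_bound_of_unitary hP.two_mul_sub_one_mem_unitary i j
  have h1 : ‖(1 : Matrix n n 𝕜) i j‖ ≤ 1 := by
    rw [one_apply]
    split_ifs <;> simp
  have h : 2 * P i j = (2 * P - 1 : Matrix n n 𝕜) i j + (1 : Matrix n n 𝕜) i j := by
    rw [Matrix.sub_apply, sub_add_cancel, two_mul, two_mul, Matrix.add_apply]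
  have := norm_add_le ((2 * P - 1 : Matrix n n 𝕜) i j) ((1 : Matrix n n 𝕜) i j)
  rw [← h, norm_mul, RCLike.norm_ofNat] at this
  linarith

theorem re_trace_mul_le_sum_norm_of_isStarProjection {R : Matrix n n 𝕜} (hR : IsStarProjection R)
    (A : Matrix n n 𝕜) : RCLike.re (R * A).trace ≤ ∑ i, ∑ j, ‖A j i‖ := by
  simp only [trace, diag_apply, mul_apply, map_sum]
  refine Finset.sum_le_sum fun i _ => Finset.sum_le_sum fun j _ => (RCLike.re_le_norm _).trans ?_
  rw [norm_mul]
  exact mul_le_of_le_one_left (norm_nonneg _) (norm_apply_le_one_of_isStarProjection hR i j)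

theorem isCompact_setOf_isStarProjection : IsCompact {P : Matrix n n 𝕜 | IsStarProjection P} := by
  refine (isCompact_setOf_norm_apply_le 1).of_isClosed_subset ?_ fun P hP =>
    norm_apply_le_one_of_isStarProjection hP
  have h : {P : Matrix n n 𝕜 | IsStarProjection P} = {P | P * P = P} ∩ {P | star P = P} := by
    ext P
    exact isStarProjection_iff'
  rw [h]
  exact (isClosed_eq (by fun_prop) continuous_id).inter (isClosed_eq continuous_star continuous_id)

theorem trace_mul_nonneg_of_isStarProjection {P Q : Matrix n n 𝕜} (hP : IsStarProjection P)
    (hQ : IsStarProjection Q) : 0 ≤ (P * Q).trace := by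
  have h : (Q * P)ᴴ * (Q * P) = P * Q * P := by
    rw [← star_eq_conjTranspose, star_mul, hP.isSelfAdjoint.star_eq, hQ.isSelfAdjoint.star_eq]
    simp only [Matrix.mul_assoc, ← Matrix.mul_assoc Q Q P, hQ.isIdempotentElem.eq]
  have htrace : (P * Q).trace = ((Q * P)ᴴ * (Q * P)).trace := by
    rw [h, trace_mul_comm (P * Q), ← Matrix.mul_assoc, hP.isIdempotentElem.eq]
  rw [htrace]
  exact (posSemidef_conjTranspose_mul_self _).trace_nonneg

/-- The orthogonal projection onto the column space of a matrix with linearly independent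
columns. -/
noncomputable def rangeProj [DecidableEq m] (N : Matrix n m 𝕜) : Matrix n n 𝕜 :=
  N * (Nᴴ * N)⁻¹ * Nᴴ

theorem isStarProjection_rangeProj [DecidableEq m] (N : Matrix n m 𝕜) :
    IsStarProjection (rangeProj N) where
  isIdempotentElem := by
    have h : (Nᴴ * N)⁻¹ * (Nᴴ * N) * (Nᴴ * N)⁻¹ = (Nᴴ * N)⁻¹ := by
      by_cases hu : IsUnit (Nᴴ * N).det
      · rw [nonsing_inv_mul _ hu, Matrix.one_mul]
      · simp [nonsing_inv_apply_not_isUnit _ hu]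
    calc rangeProj N * rangeProj N = N * ((Nᴴ * N)⁻¹ * (Nᴴ * N) * (Nᴴ * N)⁻¹) * Nᴴ := by
          simp only [rangeProj, Matrix.mul_assoc]
      _ = rangeProj N := by rw [h, rangeProj]
  isSelfAdjoint := by
    simp [IsSelfAdjoint, rangeProj, star_eq_conjTranspose, conjTranspose_nonsing_inv,
      Matrix.mul_assoc]

theorem isUnit_det_conjTranspose_mul_self [DecidableEq m] {N : Matrix n m 𝕜}
    (hN : Function.Injective N.mulVec) : IsUnit (Nᴴ * N).det :=
  (PosDef.conjTranspose_mul_self N hN).det_pos.ne'.isUnit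

theorem rangeProj_mul_self [DecidableEq m] {N : Matrix n m 𝕜} (hN : Function.Injective N.mulVec) :
    rangeProj N * N = N := by
  rw [rangeProj, Matrix.mul_assoc, Matrix.mul_assoc, nonsing_inv_mul _
    (isUnit_det_conjTranspose_mul_self hN), Matrix.mul_one]

theorem trace_rangeProj [DecidableEq m] {N : Matrix n m 𝕜} (hN : Function.Injective N.mulVec) :
    (rangeProj N).trace = Fintype.card m := by
  rw [rangeProj, trace_mul_comm, ← Matrix.mul_assoc, mul_nonsing_inv _
    (isUnit_det_conjTranspose_mul_self hN), trace_one]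

theorem rangeProj_mul_of_isUnit [DecidableEq m] (N : Matrix n m 𝕜) {T : Matrix m m 𝕜}
    (hT : IsUnit T.det) : rangeProj (N * T) = rangeProj N := by
  have hT' : IsUnit Tᴴ.det := by simpa [det_conjTranspose] using hT
  have h : ((N * T)ᴴ * (N * T))⁻¹ = T⁻¹ * ((Nᴴ * N)⁻¹ * Tᴴ⁻¹) := by
    rw [← Matrix.mul_inv_rev, ← Matrix.mul_inv_rev]
    simp only [conjTranspose_mul, Matrix.mul_assoc]
  rw [rangeProj, h, conjTranspose_mul, rangeProj]
  calc N * T * (T⁻¹ * ((Nᴴ * N)⁻¹ * Tᴴ⁻¹)) * (Tᴴ * Nᴴ)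
      = N * (T * T⁻¹) * (Nᴴ * N)⁻¹ * (Tᴴ⁻¹ * Tᴴ) * Nᴴ := by simp only [Matrix.mul_assoc]
    _ = N * (Nᴴ * N)⁻¹ * Nᴴ := by
      rw [mul_nonsing_inv _ hT, nonsing_inv_mul _ hT', Matrix.mul_one, Matrix.mul_one]

theorem continuousAt_rangeProj [DecidableEq m] {N : Matrix n m 𝕜}
    (hN : Function.Injective N.mulVec) : ContinuousAt (rangeProj (𝕜 := 𝕜) (n := n) (m := m)) N := by
  have hinv : ContinuousAt (fun M : Matrix n m 𝕜 => (Mᴴ * M)⁻¹) N := by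
    simp only [inv_def, Ring.inverse_eq_inv']
    have hd : (Nᴴ * N).det ≠ 0 := (isUnit_det_conjTranspose_mul_self hN).ne_zero
    have hc : Continuous fun M : Matrix n m 𝕜 => Mᴴ * M := by fun_prop
    exact (hc.matrix_det.continuousAt.inv₀ hd).smul hc.matrix_adjugate.continuousAt
  unfold rangeProj
  fun_prop

theorem exists_isStarProjection_range (Z : Matrix n m 𝕜) :
    ∃ (Q : Matrix n n 𝕜) (K : Matrix m n 𝕜),
      IsStarProjection Q ∧ Q * Z = Z ∧ Q = Z * K ∧ Q.trace = Z.rank := by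
  obtain ⟨B, C, V, hZ, hB, hinj⟩ := exists_rank_factorization Z
  refine ⟨rangeProj B, V * ((Bᴴ * B)⁻¹ * Bᴴ), isStarProjection_rangeProj B, ?_, ?_, ?_⟩
  · calc rangeProj B * Z = rangeProj B * B * C := by rw [Matrix.mul_assoc, ← hZ]
      _ = Z := by rw [rangeProj_mul_self hinj, ← hZ]
  · calc rangeProj B = B * ((Bᴴ * B)⁻¹ * Bᴴ) := Matrix.mul_assoc _ _ _
      _ = Z * (V * ((Bᴴ * B)⁻¹ * Bᴴ)) := by rw [← Matrix.mul_assoc Z V, ← hB]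
  · rw [trace_rangeProj hinj, Fintype.card_fin]

theorem trace_mul_le_rank_of_isStarProjection {R P : Matrix n n 𝕜} (hR : IsStarProjection R)
    (hP : IsStarProjection P) : (R * P).trace ≤ (R * P).rank := by
  classical
  obtain ⟨Q, K, hQ, hQZ, hQK, htr⟩ := exists_isStarProjection_range (R * P)
  have hRQ : R * Q = Q := by
    rw [hQK, ← Matrix.mul_assoc, ← Matrix.mul_assoc, hR.isIdempotentElem.eq]
  have hQR : Q * R = Q := by
    simpa [hQ.isSelfAdjoint.star_eq, hR.isSelfAdjoint.star_eq] using congrArg star hRQ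
  have h : (Q * (1 - P)).trace = (R * P).rank - (R * P).trace := by
    rw [Matrix.mul_sub, Matrix.mul_one, trace_sub, htr]
    nth_rewrite 3 [← hQZ]
    rw [← Matrix.mul_assoc, hQR]
  rw [← sub_nonneg, ← h]
  exact trace_mul_nonneg_of_isStarProjection hQ hP.one_sub

theorem rank_le_trace_mul_of_isStarProjection {R P : Matrix n n 𝕜} {Z : Matrix n m 𝕜}
    (hR : IsStarProjection R) (hP : IsStarProjection P) (hRZ : R * Z = Z) (hPZ : P * Z = Z) :
    (Z.rank : 𝕜) ≤ (R * P).trace := by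
  obtain ⟨Q, K, hQ, -, hQK, htr⟩ := exists_isStarProjection_range Z
  have hRQ : R * Q = Q := by rw [hQK, ← Matrix.mul_assoc, hRZ]
  have hPQ : P * Q = Q := by rw [hQK, ← Matrix.mul_assoc, hPZ]
  have h : ((R - Q) * P).trace = (R * P).trace - Z.rank := by
    rw [Matrix.sub_mul, trace_sub, trace_mul_comm Q, hPQ, htr]
  rw [← sub_nonneg, ← h]
  exact trace_mul_nonneg_of_isStarProjection (hQ.sub_of_mul_eq_right hR hRQ) hP

end StarProjection

section Semistability

variable {P n : Type*} {m : P → Type*} [Fintype P] [Fintype n] [∀ p, Fintype (m p)]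

/-- King's slope inequality, in terms of ranks, for the configuration of the column spaces of the
matrices `M p` weighted by `c p`: every linear map `y` out of the ambient space satisfies
`κ * rank y ≤ ∑ p, c p * rank (y * M p)`. -/
def IsSemistable {K : Type*} [Field K] (c : P → ℝ) (κ : ℝ) (M : ∀ p, Matrix n (m p) K) : Prop :=
  ∀ y : Matrix n n K, κ * y.rank ≤ ∑ p, c p * (y * M p).rank

theorem isSemistable_map_ringEquiv_iff {K L : Type*} [Field K] [Field L] {c : P → ℝ} {κ : ℝ}
    {M : ∀ p, Matrix n (m p) K} (τ : K ≃+* L) :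
    IsSemistable c κ (fun p => (M p).map τ) ↔ IsSemistable c κ M := by
  have hmap (y : Matrix n n K) (p : P) : (y.map τ * (M p).map τ).rank = (y * M p).rank := by
    rw [← rank_map_ringEquiv (y * M p) τ, Matrix.map_mul]
  refine ⟨fun h y => by simpa only [rank_map_ringEquiv, hmap] using h (y.map τ), fun h y => ?_⟩
  have hy : (y.map τ.symm).map τ = y := by ext; simp
  simpa only [← hmap, ← rank_map_ringEquiv (y.map τ.symm) τ, hy] using h (y.map τ.symm)

variable {𝕜 : Type*} [RCLike 𝕜] [∀ p, DecidableEq (m p)] {c : P → ℝ} {κ : ℝ}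

/-- The `c`-weighted sum of the orthogonal projections onto the column spaces of the `M p`. -/
noncomputable def weightedRangeProj (c : P → ℝ) (M : ∀ p, Matrix n (m p) 𝕜) : Matrix n n 𝕜 :=
  ∑ p, c p • rangeProj (M p)

theorem isHermitian_weightedRangeProj {M : ∀ p, Matrix n (m p) 𝕜} :
    (weightedRangeProj c M).IsHermitian :=
  isSelfAdjoint_sum _ fun p _ =>
    (IsSelfAdjoint.all (c p)).smul (isStarProjection_rangeProj (M p)).isSelfAdjoint

theorem continuousAt_weightedRangeProj {M : ∀ p, Matrix n (m p) 𝕜}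
    (hM : ∀ p, Function.Injective (M p).mulVec) : ContinuousAt (weightedRangeProj c) M :=
  tendsto_finsetSum _ fun p _ =>
    ((continuousAt_rangeProj (hM p)).tendsto.comp (continuousAt_apply p M)).const_smul (c p)

variable [DecidableEq n]

theorem exists_isStarProjection_mul_rank_sub_le (hc : ∀ p, 0 ≤ c p) (M : ∀ p, Matrix n (m p) 𝕜)
    (y : Matrix n n 𝕜) : ∃ R : Matrix n n 𝕜, IsStarProjection R ∧
      κ * y.rank - ∑ p, c p * (y * M p).rank ≤
        RCLike.re (R * (κ • 1 - weightedRangeProj c M)).trace := by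
  obtain ⟨R, K, hR, -, hRK, htr⟩ := exists_isStarProjection_range yᴴ
  have hRy : R = Kᴴ * y := by
    rw [← hR.isSelfAdjoint.star_eq, star_eq_conjTranspose, hRK, conjTranspose_mul,
      conjTranspose_conjTranspose]
  have hrank (p : P) : RCLike.re (R * rangeProj (M p)).trace ≤ (y * M p).rank := by
    have h := (RCLike.le_iff_re_im.1
      (trace_mul_le_rank_of_isStarProjection hR (isStarProjection_rangeProj (M p)))).1
    have hfac : R * rangeProj (M p) = Kᴴ * (y * M p * ((M p)ᴴ * M p)⁻¹ * (M p)ᴴ) := by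
      simp only [hRy, rangeProj, Matrix.mul_assoc]
    have hle : (R * rangeProj (M p)).rank ≤ (y * M p).rank := by
      rw [hfac]
      refine (rank_mul_le_right _ _).trans ((rank_mul_le_left _ _).trans ?_)
      exact rank_mul_le_left _ _
    simp only [RCLike.natCast_re] at h
    exact h.trans (mod_cast hle)
  refine ⟨R, hR, ?_⟩
  have hexp : RCLike.re (R * (κ • 1 - weightedRangeProj c M)).trace =
      κ * y.rank - ∑ p, c p * RCLike.re (R * rangeProj (M p)).trace := by
    simp only [weightedRangeProj, Matrix.mul_sub, Matrix.mul_smul, Matrix.mul_one, Matrix.mul_sum,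
      trace_sub, trace_smul, trace_sum, map_sub, map_sum, RCLike.smul_re, htr, rank_conjTranspose,
      RCLike.natCast_re]
  rw [hexp]
  gcongr with p
  exacts [hc p, hrank p]

-- The semistability defects take finitely many values, so a small defect is not positive.
theorem eventually_isSemistable (hc : ∀ p, 0 ≤ c p) {M : ∀ p, Matrix n (m p) 𝕜}
    (hM : ∀ p, Function.Injective (M p).mulVec) (hbal : weightedRangeProj c M = κ • 1) :
    ∀ᶠ N in 𝓝 M, IsSemistable c κ N := by
  let ε (N : ∀ p, Matrix n (m p) 𝕜) : ℝ := ∑ i, ∑ j, ‖(κ • 1 - weightedRangeProj c N) j i‖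
  have hε : Tendsto ε (𝓝 M) (𝓝 0) := by
    have hcont : ContinuousAt ε M := by
      have := continuousAt_weightedRangeProj (c := c) hM
      fun_prop
    simpa [ContinuousAt, ε, hbal] using hcont
  let s := Fin (Fintype.card n + 1)
  have hgap : ∀ᶠ N in 𝓝 M, ∀ (a : s) (b : P → s),
      κ * a - ∑ p, c p * b p ≤ ε N → κ * a - ∑ p, c p * b p ≤ 0 := by
    simp only [eventually_all]
    intro a b
    by_cases h : κ * a - ∑ p, c p * b p ≤ 0
    · exact Eventually.of_forall fun _ _ => h
    · filter_upwards [hε.eventually_lt_const (not_le.1 h)] with N hN hle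
      exact absurd hN hle.not_gt
  filter_upwards [hgap] with N hN y
  obtain ⟨R, hR, hle⟩ := exists_isStarProjection_mul_rank_sub_le (κ := κ) hc N y
  refine sub_nonpos.1 <| hN ⟨y.rank, Nat.lt_succ_of_le (rank_le_card_width y)⟩
    (fun p => ⟨(y * N p).rank, Nat.lt_succ_of_le (rank_le_card_height _)⟩)
    (hle.trans (re_trace_mul_le_sum_norm_of_isStarProjection hR _))

end Semistability

section LoewnerBounds

variable {𝕜 n : Type*} [RCLike 𝕜] [Fintype n] [DecidableEq n]

theorem smul_one_le_iff_le_eigenvalues {A : Matrix n n 𝕜} (hA : A.IsHermitian) {t : ℝ} :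
    t • 1 ≤ A ↔ ∀ i, t ≤ hA.eigenvalues i := by
  have hA' : IsSelfAdjoint A := hA
  rw [← Algebra.algebraMap_eq_smul_one, algebraMap_le_iff_le_spectrum (a := A),
    hA.spectrum_real_eq_range_eigenvalues, Set.forall_mem_range]

theorem exists_pos_smul_one_le_of_posDef {𝕜 n : Type*} [RCLike 𝕜] [Finite n] [DecidableEq n]
    {A : Matrix n n 𝕜} (hA : A.PosDef) : ∃ t : ℝ, 0 < t ∧ t • 1 ≤ A := by
  have := Fintype.ofFinite n
  simp only [smul_one_le_iff_le_eigenvalues hA.isHermitian]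
  have h : ∀ i, ∀ᶠ t : ℝ in 𝓝[>] 0, t ≤ hA.isHermitian.eigenvalues i := fun i =>
    nhdsWithin_le_nhds ((eventually_lt_nhds (hA.eigenvalues_pos i)).mono fun _ => le_of_lt)
  exact ((eventually_mem_nhdsWithin (a := (0 : ℝ))).and (eventually_all.2 h)).exists

theorem pow_card_le_re_det_of_smul_one_le {A : Matrix n n 𝕜} {t : ℝ} (ht : 0 ≤ t)
    (h : t • 1 ≤ A) : t ^ Fintype.card n ≤ RCLike.re A.det := by
  have hA : A.IsHermitian := by
    have h1 : (t • 1 : Matrix n n 𝕜).IsHermitian := isHermitian_one.smul (IsSelfAdjoint.all t)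
    simpa using (le_iff.1 h).isHermitian.add h1
  rw [hA.det_eq_prod_eigenvalues, ← RCLike.ofReal_prod, RCLike.ofReal_re]
  calc t ^ Fintype.card n = ∏ _i : n, t := by rw [Finset.prod_const, Finset.card_univ]
    _ ≤ ∏ i, hA.eigenvalues i := Finset.prod_le_prod (fun _ _ => ht) fun i _ =>
      (smul_one_le_iff_le_eigenvalues hA).1 h i

theorem re_det_smul_one_le_of_trace_eq_one {A : Matrix n n 𝕜} (hA : A.PosSemidef)
    (htr : A.trace = 1) : RCLike.re A.det • 1 ≤ A := by
  have hsum : ∑ i, hA.isHermitian.eigenvalues i = 1 := by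
    have h := hA.isHermitian.trace_eq_sum_eigenvalues
    rw [htr] at h
    exact_mod_cast h.symm
  have hle (i : n) : hA.isHermitian.eigenvalues i ≤ 1 :=
    hsum ▸ Finset.single_le_sum (fun j _ => hA.eigenvalues_nonneg j) (Finset.mem_univ i)
  rw [smul_one_le_iff_le_eigenvalues hA.isHermitian]
  intro i
  rw [hA.isHermitian.det_eq_prod_eigenvalues, ← RCLike.ofReal_prod, RCLike.ofReal_re,
    ← Finset.mul_prod_erase _ _ (Finset.mem_univ i)]
  exact mul_le_of_le_one_right (hA.eigenvalues_nonneg i)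
    (Finset.prod_le_one (fun j _ => hA.eigenvalues_nonneg j) fun j _ => hle j)

end LoewnerBounds

section GramDeterminant

variable {𝕜 n m : Type*} [RCLike 𝕜] [Fintype n] [Fintype m] [DecidableEq m]

/-- The Gram determinant of the columns of `N`: the squared volume of the parallelepiped they
span. -/
noncomputable def gramDet (N : Matrix n m 𝕜) : ℝ :=
  RCLike.re (Nᴴ * N).det

theorem continuous_gramDet : Continuous (gramDet : Matrix n m 𝕜 → ℝ) := by
  unfold gramDet
  fun_prop

theorem gramDet_pos_iff {N : Matrix n m 𝕜} : 0 < gramDet N ↔ Function.Injective N.mulVec := by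
  refine ⟨fun h => ?_, fun h => (RCLike.pos_iff.1 (PosDef.conjTranspose_mul_self N h).det_pos).1⟩
  have hdet : (Nᴴ * N).det ≠ 0 := fun h0 => h.ne' (by rw [gramDet, h0, map_zero])
  have hinj := mulVec_injective_of_isUnit ((isUnit_iff_isUnit_det _).2 hdet.isUnit)
  refine Function.Injective.of_comp (f := Nᴴ.mulVec) ?_
  convert hinj using 1
  exact funext fun v => mulVec_mulVec v Nᴴ N

theorem ofReal_gramDet (N : Matrix n m 𝕜) : (gramDet N : 𝕜) = (Nᴴ * N).det :=
  RCLike.conj_eq_iff_re.1 (posSemidef_conjTranspose_mul_self N).det_nonneg.isSelfAdjoint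

theorem gramDet_smul (a : ℝ) (N : Matrix n m 𝕜) :
    gramDet (a • N) = (a ^ 2) ^ Fintype.card m * gramDet N := by
  have h : (a • N)ᴴ * (a • N) = (a ^ 2) • (Nᴴ * N) := by
    rw [conjTranspose_smul, star_trivial, Matrix.smul_mul, Matrix.mul_smul, smul_smul, sq]
  rw [gramDet, h, ← algebraMap_smul 𝕜, det_smul, RCLike.algebraMap_eq_ofReal, ← RCLike.ofReal_pow,
    RCLike.re_ofReal_mul, gramDet]

theorem exists_mul_gramDet_pow_le [DecidableEq n] {N : Matrix n m 𝕜}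
    (hN : Function.Injective N.mulVec) : ∃ t : ℝ, 0 < t ∧ ∀ h : Matrix n n 𝕜, (hᴴ * h).trace = 1 →
      (gramDet h * t) ^ Fintype.card m ≤ gramDet (h * N) := by
  obtain ⟨t, ht, htN⟩ := exists_pos_smul_one_le_of_posDef (PosDef.conjTranspose_mul_self N hN)
  refine ⟨t, ht, fun h htr => ?_⟩
  have hpsd := posSemidef_conjTranspose_mul_self h
  have hdet : 0 ≤ gramDet h := (RCLike.nonneg_iff.1 hpsd.det_nonneg).1
  refine pow_card_le_re_det_of_smul_one_le (mul_nonneg hdet ht.le) ?_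
  have h1 : (gramDet h * t) • (1 : Matrix m m 𝕜) ≤ gramDet h • (Nᴴ * N) := by
    rw [mul_smul]
    exact smul_le_smul_of_nonneg_left htN hdet
  have h2 : gramDet h • (Nᴴ * N) ≤ (h * N)ᴴ * (h * N) := by
    have := (le_iff.1 (re_det_smul_one_le_of_trace_eq_one hpsd htr)).conjTranspose_mul_mul_same N
    rwa [Matrix.mul_sub, Matrix.sub_mul, Matrix.mul_smul, Matrix.smul_mul, Matrix.mul_one,
      Matrix.mul_assoc Nᴴ, Matrix.mul_assoc hᴴ, ← Matrix.mul_assoc Nᴴ, ← conjTranspose_mul] at this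
  exact h1.trans h2

end GramDeterminant

section Jacobi

variable {𝕜 n : Type*} [NontriviallyNormedField 𝕜] [Fintype n] [DecidableEq n]

theorem hasDerivAt_det {R : Type*} [NontriviallyNormedField R] [NormedAlgebra 𝕜 R]
    {A : 𝕜 → Matrix n n R} {A' : Matrix n n R} {t : 𝕜}
    (hA : ∀ i j, HasDerivAt (fun s => A s i j) (A' i j) t) :
    HasDerivAt (fun s => (A s).det) ((A t).adjugate * A').trace t := by
  let D : ContinuousMultilinearMap R (fun _ : n => n → R) R :=
    ⟨detRowAlternating.toMultilinearMap, continuous_id.matrix_det⟩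
  have hrows : HasDerivAt (fun s i => A s i) (fun i => A' i) t :=
    hasDerivAt_pi.2 fun i => hasDerivAt_pi.2 (hA i)
  have h := ((D.hasFDerivAt (A t)).restrictScalars 𝕜).comp_hasDerivAt t hrows
  have hrow (i : n) : D (Function.update (A t) i (A' i)) = ∑ j, (A t).adjugate j i * A' i j := by
    calc D (Function.update (A t) i (A' i)) = cramer (A t)ᵀ (A' i) i :=
          (cramer_transpose_apply _ _ _).symm
      _ = ∑ j, (A t).adjugate j i * A' i j := by
        rw [cramer_eq_adjugate_mulVec, ← adjugate_transpose, mulVec, dotProduct]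
        rfl
  have htrace : D.linearDeriv (A t) (fun i => A' i) = ((A t).adjugate * A').trace := by
    calc D.linearDeriv (A t) (fun i => A' i) = ∑ i, D (Function.update (A t) i (A' i)) :=
          D.linearDeriv_apply _ _
      _ = ∑ i, ∑ j, (A t).adjugate j i * A' i j := Finset.sum_congr rfl fun i _ => hrow i
      _ = ((A t).adjugate * A').trace := Finset.sum_comm
  rw [← htrace]
  exact h

end Jacobi

section GramDerivative

variable {𝕜 n m : Type*} [RCLike 𝕜] [Fintype n] [DecidableEq n] {Z : Matrix n n 𝕜}

theorem hasDerivAt_conjTranspose_mul_self_apply (hZ : Z.IsHermitian) (N : Matrix n m 𝕜) (i j : m) :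
    HasDerivAt (fun s : ℝ => (((1 + s • Z) * N)ᴴ * ((1 + s • Z) * N) : Matrix m m 𝕜) i j)
      (((2 : ℝ) • (Nᴴ * Z * N) : Matrix m m 𝕜) i j) 0 := by
  have hexp (s : ℝ) : (((1 + s • Z) * N)ᴴ * ((1 + s • Z) * N) : Matrix m m 𝕜) i j =
      (Nᴴ * N) i j + (s • ((2 : ℝ) • (Nᴴ * Z * N) : Matrix m m 𝕜) i j +
        s ^ 2 • (Nᴴ * Z * Z * N) i j) := by
    have hmat : ((1 + s • Z) * N)ᴴ * ((1 + s • Z) * N) =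
        Nᴴ * N + (s • ((2 : ℝ) • (Nᴴ * Z * N)) + s ^ 2 • (Nᴴ * Z * Z * N)) := by
      simp only [conjTranspose_mul, conjTranspose_add, conjTranspose_smul, star_trivial, hZ.eq,
        Matrix.mul_add, Matrix.add_mul, Matrix.one_mul, Matrix.mul_smul, Matrix.smul_mul,
        Matrix.mul_assoc, smul_smul, two_smul, sq, smul_add]
      abel
    rw [hmat]
    rfl
  simp only [hexp]
  have h1 := (hasDerivAt_id (0 : ℝ)).smul_const (((2 : ℝ) • (Nᴴ * Z * N) : Matrix m m 𝕜) i j)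
  have h2 := ((hasDerivAt_id (0 : ℝ)).pow 2).smul_const ((Nᴴ * Z * Z * N) i j)
  simpa using (h1.add h2).const_add ((Nᴴ * N) i j)

variable [Fintype m]

theorem hasDerivAt_re_trace_conjTranspose_mul_self (hZ : Z.IsHermitian) (N : Matrix n m 𝕜) :
    HasDerivAt (fun s : ℝ => RCLike.re (((1 + s • Z) * N)ᴴ * ((1 + s • Z) * N)).trace)
      (2 * RCLike.re (Z * (N * Nᴴ)).trace) 0 := by
  have h := (RCLike.reCLM (K := 𝕜)).hasFDerivAt.comp_hasDerivAt (0 : ℝ)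
    (HasDerivAt.fun_sum fun i (_ : i ∈ Finset.univ) =>
      hasDerivAt_conjTranspose_mul_self_apply hZ N i i)
  refine h.congr_deriv ?_
  change RCLike.re ((2 : ℝ) • (Nᴴ * Z * N)).trace = _
  rw [trace_smul, RCLike.smul_re, ← Matrix.mul_assoc, trace_mul_comm (Z * N), ← Matrix.mul_assoc]

theorem hasDerivAt_gramDet [DecidableEq m] (hZ : Z.IsHermitian) {N : Matrix n m 𝕜}
    (hN : Function.Injective N.mulVec) :
    HasDerivAt (fun s : ℝ => gramDet ((1 + s • Z) * N))
      (2 * RCLike.re (Z * rangeProj N).trace * gramDet N) 0 := by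
  have h0 : ((1 + (0 : ℝ) • Z) * N) = N := by rw [zero_smul, add_zero, Matrix.one_mul]
  have hdet := (RCLike.reCLM (K := 𝕜)).hasFDerivAt.comp_hasDerivAt (0 : ℝ)
    (hasDerivAt_det (hasDerivAt_conjTranspose_mul_self_apply hZ N))
  have htr : RCLike.re ((Nᴴ * N).adjugate * ((2 : ℝ) • (Nᴴ * Z * N))).trace =
      2 * RCLike.re (Z * rangeProj N).trace * gramDet N := by
    have hadj : (Nᴴ * N).adjugate = gramDet N • (Nᴴ * N)⁻¹ := by
      rw [← algebraMap_smul 𝕜, RCLike.algebraMap_eq_ofReal, ofReal_gramDet, inv_def, smul_smul,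
        Ring.mul_inverse_cancel _ (isUnit_det_conjTranspose_mul_self hN), one_smul]
    have hcycle : ((Nᴴ * N)⁻¹ * (Nᴴ * Z * N)).trace = (Z * rangeProj N).trace := by
      rw [rangeProj, ← Matrix.mul_assoc Z, trace_mul_comm _ Nᴴ, trace_mul_comm]
      simp only [Matrix.mul_assoc]
    rw [hadj, Matrix.mul_smul, Matrix.smul_mul, trace_smul, trace_smul, hcycle, RCLike.smul_re,
      RCLike.smul_re]
    ring
  refine hdet.congr_deriv ?_
  rwa [h0]

theorem hasDerivAt_log_gramDet [DecidableEq m] (hZ : Z.IsHermitian) {N : Matrix n m 𝕜}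
    (hN : Function.Injective N.mulVec) :
    HasDerivAt (fun s : ℝ => Real.log (gramDet ((1 + s • Z) * N)))
      (2 * RCLike.re (Z * rangeProj N).trace) 0 := by
  have hpos := gramDet_pos_iff.2 hN
  have h0 : ((1 + (0 : ℝ) • Z) * N) = N := by rw [zero_smul, add_zero, Matrix.one_mul]
  refine ((hasDerivAt_gramDet hZ hN).log (by rw [h0]; exact hpos.ne')).congr_deriv ?_
  rw [h0, mul_div_cancel_right₀ _ hpos.ne']

end GramDerivative

theorem tendsto_add_mul_log_add_div_nhdsGT_zero (a b : ℝ) {ε : ℝ} (hε : 0 < ε) :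
    Tendsto (fun x => a + b * Real.log x + ε / x) (𝓝[>] 0) atTop := by
  have hlog : Tendsto (fun x => a * x + b * (Real.log x * x) + ε) (𝓝[>] 0) (𝓝 ε) := by
    have hlogx : Tendsto (fun x => Real.log x * x) (𝓝[>] 0) (𝓝 0) := by
      simpa only [Real.rpow_one] using tendsto_log_mul_rpow_nhdsGT_zero zero_lt_one
    have hx : Tendsto (fun x : ℝ => x) (𝓝[>] 0) (𝓝 0) :=
      tendsto_nhdsWithin_of_tendsto_nhds tendsto_id
    simpa using ((hx.const_mul a).add (hlogx.const_mul b)).add_const ε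
  refine (hlog.pos_mul_atTop hε tendsto_inv_nhdsGT_zero).congr' ?_
  filter_upwards [self_mem_nhdsWithin] with x hx
  have : x ≠ 0 := (Set.mem_Ioi.1 hx).ne'
  field_simp

theorem mulVec_injective_mul {𝕜 k l n : Type*} [Semiring 𝕜] [Fintype l] [Fintype n]
    {h : Matrix k n 𝕜} {N : Matrix n l 𝕜} (hh : Function.Injective h.mulVec)
    (hN : Function.Injective N.mulVec) : Function.Injective (h * N).mulVec := by
  have hcomp : (h * N).mulVec = h.mulVec ∘ N.mulVec := funext fun v => (mulVec_mulVec v h N).symm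
  exact hcomp ▸ hh.comp hN

theorem isCompact_setOf_trace_conjTranspose_mul_self_eq_one {𝕜 m n : Type*} [RCLike 𝕜]
    [Fintype m] [Fintype n] : IsCompact {h : Matrix m n 𝕜 | (hᴴ * h).trace = 1} := by
  refine (isCompact_setOf_norm_apply_le 1).of_isClosed_subset
    (isClosed_eq (by fun_prop) continuous_const) fun h hh i j => ?_
  have hre : ∑ k, ∑ l, ‖h l k‖ ^ 2 = 1 := by
    have htr : (hᴴ * h).trace = 1 := hh
    simpa only [trace, diag_apply, mul_apply, conjTranspose_apply, RCLike.star_def,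
      RCLike.conj_mul, map_sum, ← RCLike.ofReal_pow, RCLike.ofReal_re, RCLike.one_re] using
      congrArg RCLike.re htr
  have hle : ‖h i j‖ ^ 2 ≤ 1 := hre ▸
    (Finset.single_le_sum (f := fun l => ‖h l j‖ ^ 2) (fun _ _ => sq_nonneg _)
      (Finset.mem_univ i)).trans (Finset.single_le_sum (f := fun k => ∑ l, ‖h l k‖ ^ 2)
        (fun _ _ => Finset.sum_nonneg fun _ _ => sq_nonneg _) (Finset.mem_univ j))
  exact (sq_le_one_iff₀ (norm_nonneg _)).1 hle

theorem exists_smul_trace_conjTranspose_mul_self_eq_one {𝕜 n : Type*} [RCLike 𝕜] [Fintype n]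
    [Nonempty n] {h : Matrix n n 𝕜} (hh : Function.Injective h.mulVec) :
    ∃ a : ℝ, a ≠ 0 ∧ Function.Injective (a • h).mulVec ∧ ((a • h)ᴴ * (a • h)).trace = 1 := by
  classical
  have hpos : 0 < (hᴴ * h).trace := (PosDef.conjTranspose_mul_self h hh).trace_pos
  obtain ⟨t, ht, htr⟩ := RCLike.pos_iff_exists_ofReal.1 hpos
  refine ⟨(√t)⁻¹, by positivity, ?_, ?_⟩
  · rw [← gramDet_pos_iff, gramDet_smul]
    have := gramDet_pos_iff.2 hh
    positivity
  · rw [conjTranspose_smul, star_trivial, Matrix.smul_mul, Matrix.mul_smul, smul_smul, trace_smul,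
      ← mul_inv, Real.mul_self_sqrt ht.le, ← htr, RCLike.real_smul_eq_coe_mul, ← RCLike.ofReal_mul,
      inv_mul_cancel₀ ht.ne', RCLike.ofReal_one]

section Potential

variable {𝕜 P n : Type*} {m : P → Type*} [RCLike 𝕜] [Fintype P] [Fintype n] [DecidableEq n]
  [∀ p, Fintype (m p)] [∀ p, DecidableEq (m p)] {c : P → ℝ} {κ ε : ℝ} {M : ∀ p, Matrix n (m p) 𝕜}

/-- The regularized Kempf–Ness potential of the configuration of column spaces of the `M p`: a
function of `h` which is invariant under scaling, whose critical points are the `h` for which the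
configuration `h * M p` is balanced up to an error controlled by `ε`. The last term makes it
coercive. -/
noncomputable def kempfNessPotential (c : P → ℝ) (κ ε : ℝ) (M : ∀ p, Matrix n (m p) 𝕜)
    (h : Matrix n n 𝕜) : ℝ :=
  ∑ p, c p * Real.log (gramDet (h * M p)) - κ * Real.log (gramDet h) +
    ε * (RCLike.re (hᴴ * h).trace ^ Fintype.card n / gramDet h)

theorem kempfNessPotential_smul (hcard : ∑ p, c p * Fintype.card (m p) = κ * Fintype.card n)
    (hM : ∀ p, Function.Injective (M p).mulVec) {h : Matrix n n 𝕜}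
    (hh : Function.Injective h.mulVec) {a : ℝ} (ha : a ≠ 0) :
    kempfNessPotential c κ ε M (a • h) = kempfNessPotential c κ ε M h := by
  have hlog : Real.log (gramDet (a • h)) =
      Fintype.card n * Real.log (a ^ 2) + Real.log (gramDet h) := by
    rw [gramDet_smul, Real.log_mul (by positivity) (gramDet_pos_iff.2 hh).ne', Real.log_pow]
  have htr : RCLike.re ((a • h)ᴴ * (a • h)).trace = a ^ 2 * RCLike.re (hᴴ * h).trace := by
    rw [conjTranspose_smul, star_trivial, Matrix.smul_mul, Matrix.mul_smul, smul_smul, ← sq,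
      trace_smul, RCLike.smul_re]
  have hsum : ∑ p, c p * Real.log (gramDet (a • h * M p)) =
      κ * Fintype.card n * Real.log (a ^ 2) + ∑ p, c p * Real.log (gramDet (h * M p)) := by
    rw [← hcard, Finset.sum_mul, ← Finset.sum_add_distrib]
    refine Finset.sum_congr rfl fun p _ => ?_
    rw [Matrix.smul_mul, gramDet_smul, Real.log_mul (by positivity)
      (gramDet_pos_iff.2 (mulVec_injective_mul hh (hM p))).ne', Real.log_pow]
    ring
  rw [kempfNessPotential, kempfNessPotential, hsum, hlog, htr, gramDet_smul, mul_pow,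
    mul_div_mul_left _ _ (by positivity)]
  ring

theorem hasDerivAt_kempfNessPotential {Z : Matrix n n 𝕜} (hZ : Z.IsHermitian)
    (hM : ∀ p, Function.Injective (M p).mulVec) {h : Matrix n n 𝕜}
    (hh : Function.Injective h.mulVec) (htr : (hᴴ * h).trace = 1) :
    HasDerivAt (fun s : ℝ => kempfNessPotential c κ ε M ((1 + s • Z) * h))
      (2 * RCLike.re (Z * (weightedRangeProj c (fun p => h * M p) - κ • 1 -
        (ε / gramDet h) • (1 - (Fintype.card n : ℝ) • (h * hᴴ)))).trace) 0 := by
  have hD := (gramDet_pos_iff.2 hh).ne'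
  have h0 : ((1 + (0 : ℝ) • Z) * h) = h := by rw [zero_smul, add_zero, Matrix.one_mul]
  have hre : RCLike.re (hᴴ * h).trace = 1 := by rw [htr, RCLike.one_re]
  have hP : rangeProj h = 1 := by
    have hunit := (isUnit_iff_isUnit_det h).1 (mulVec_injective_iff_isUnit.1 hh)
    have h1 := rangeProj_mul_of_isUnit (1 : Matrix n n 𝕜) hunit
    rwa [Matrix.one_mul, rangeProj.eq_1 1, conjTranspose_one, Matrix.one_mul, Matrix.one_mul,
      inv_one, Matrix.one_mul] at h1
  have hsum := HasDerivAt.fun_sum fun p (_ : p ∈ Finset.univ) =>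
    (hasDerivAt_log_gramDet hZ (mulVec_injective_mul hh (hM p))).const_mul (c p)
  have hpen := ((hasDerivAt_re_trace_conjTranspose_mul_self hZ h).pow (Fintype.card n)).div
    (hasDerivAt_gramDet hZ hh) (by rwa [h0])
  have hder := (hsum.sub ((hasDerivAt_log_gramDet hZ hh).const_mul κ)).add (hpen.const_mul ε)
  simp only [kempfNessPotential, Matrix.mul_assoc _ h]
  refine hder.congr_deriv ?_
  simp only [Pi.pow_apply, h0, hre, hP, one_pow, weightedRangeProj, Matrix.mul_sub,
    Matrix.mul_smul, Matrix.mul_one, Matrix.mul_sum, trace_sub, trace_smul, trace_sum, map_sub,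
    map_sum, RCLike.smul_re, mul_left_comm _ (2 : ℝ), ← Finset.mul_sum]
  field_simp
  ring

theorem exists_add_mul_log_add_div_le_kempfNessPotential (hc : ∀ p, 0 ≤ c p)
    (hM : ∀ p, Function.Injective (M p).mulVec) :
    ∃ a b : ℝ, ∀ h : Matrix n n 𝕜, Function.Injective h.mulVec → (hᴴ * h).trace = 1 →
      a + b * Real.log (gramDet h) + ε / gramDet h ≤ kempfNessPotential c κ ε M h := by
  choose t ht hle using fun p => exists_mul_gramDet_pow_le (hM p)
  refine ⟨∑ p, c p * (Fintype.card (m p) * Real.log (t p)),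
    ∑ p, c p * Fintype.card (m p) - κ, fun h hh htr => ?_⟩
  have hD := gramDet_pos_iff.2 hh
  have hlog (p : P) : Fintype.card (m p) * (Real.log (gramDet h) + Real.log (t p)) ≤
      Real.log (gramDet (h * M p)) := by
    rw [← Real.log_mul hD.ne' (ht p).ne', ← Real.log_pow]
    exact Real.log_le_log (pow_pos (mul_pos hD (ht p)) _) (hle p h htr)
  calc _ = ∑ p, c p * (Fintype.card (m p) * (Real.log (gramDet h) + Real.log (t p))) -
        κ * Real.log (gramDet h) + ε / gramDet h := by
        simp only [mul_add, Finset.sum_add_distrib, sub_mul, Finset.sum_mul, mul_assoc]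
        ring
    _ ≤ ∑ p, c p * Real.log (gramDet (h * M p)) - κ * Real.log (gramDet h) + ε / gramDet h := by
        gcongr with p
        exacts [hc p, hlog p]
    _ = kempfNessPotential c κ ε M h := by
        rw [kempfNessPotential, htr, RCLike.one_re, one_pow, mul_one_div]

theorem continuousOn_kempfNessPotential (hM : ∀ p, Function.Injective (M p).mulVec) :
    ContinuousOn (kempfNessPotential c κ ε M) {h | Function.Injective h.mulVec} := by
  have hlog (p : P) : ContinuousOn (fun h : Matrix n n 𝕜 => Real.log (gramDet (h * M p)))
      {h | Function.Injective h.mulVec} :=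
    (continuous_gramDet.comp (by fun_prop)).continuousOn.log fun h hh =>
      (gramDet_pos_iff.2 (mulVec_injective_mul hh (hM p))).ne'
  have hne (h : Matrix n n 𝕜) (hh : h ∈ {h : Matrix n n 𝕜 | Function.Injective h.mulVec}) :
      gramDet h ≠ 0 := (gramDet_pos_iff.2 hh).ne'
  have hD : ContinuousOn (gramDet : Matrix n n 𝕜 → ℝ) {h | Function.Injective h.mulVec} :=
    continuous_gramDet.continuousOn
  have htr : Continuous fun h : Matrix n n 𝕜 => RCLike.re (hᴴ * h).trace := by fun_prop
  exact ((continuousOn_finsetSum _ fun p _ => (hlog p).const_mul _).sub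
    ((hD.log hne).const_mul κ)).add (((htr.pow _).continuousOn.div hD hne).const_mul ε)

theorem exists_forall_kempfNessPotential_le [Nonempty n] (hc : ∀ p, 0 ≤ c p) (hε : 0 < ε)
    (hcard : ∑ p, c p * Fintype.card (m p) = κ * Fintype.card n)
    (hM : ∀ p, Function.Injective (M p).mulVec) :
    ∃ h : Matrix n n 𝕜, Function.Injective h.mulVec ∧ (hᴴ * h).trace = 1 ∧
      ∀ h' : Matrix n n 𝕜, Function.Injective h'.mulVec →
        kempfNessPotential c κ ε M h ≤ kempfNessPotential c κ ε M h' := by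
  have hnormalize (h : Matrix n n 𝕜) (hh : Function.Injective h.mulVec) :
      ∃ h' : Matrix n n 𝕜, Function.Injective h'.mulVec ∧ (h'ᴴ * h').trace = 1 ∧
        kempfNessPotential c κ ε M h' = kempfNessPotential c κ ε M h := by
    obtain ⟨a, ha, hinj, htr⟩ := exists_smul_trace_conjTranspose_mul_self_eq_one hh
    exact ⟨a • h, hinj, htr, kempfNessPotential_smul hcard hM hh ha⟩
  obtain ⟨h₀, hh₀, htr₀, -⟩ := hnormalize 1 (fun v w hvw => by simpa using hvw)
  obtain ⟨a, b, hlow⟩ :=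
    exists_add_mul_log_add_div_le_kempfNessPotential (κ := κ) (ε := ε) hc hM
  obtain ⟨δ, hδ, hcoercive⟩ := mem_nhdsGT_iff_exists_Ioo_subset.1
    ((tendsto_add_mul_log_add_div_nhdsGT_zero a b hε).eventually_gt_atTop
      (kempfNessPotential c κ ε M h₀))
  let S : Set (Matrix n n 𝕜) := {h | (hᴴ * h).trace = 1} ∩ {h | min δ (gramDet h₀) ≤ gramDet h}
  have hS : IsCompact S := isCompact_setOf_trace_conjTranspose_mul_self_eq_one.inter_right
    (isClosed_le continuous_const continuous_gramDet)
  have hSinj : S ⊆ {h | Function.Injective h.mulVec} := fun h hh =>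
    gramDet_pos_iff.1 ((lt_min hδ (gramDet_pos_iff.2 hh₀)).trans_le hh.2)
  have hh₀S : h₀ ∈ S := ⟨htr₀, min_le_right δ (gramDet h₀)⟩
  obtain ⟨h, hhS, hmin⟩ :=
    hS.exists_isMinOn ⟨h₀, hh₀S⟩ ((continuousOn_kempfNessPotential hM).mono hSinj)
  refine ⟨h, hSinj hhS, hhS.1, fun h' hh' => ?_⟩
  obtain ⟨h'', hh'', htr'', heq⟩ := hnormalize h' hh'
  rw [← heq]
  rcases lt_or_ge (gramDet h'') δ with hlt | hge
  · exact (hmin hh₀S).trans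
      ((hcoercive ⟨gramDet_pos_iff.2 hh'', hlt⟩).le.trans (hlow h'' hh'' htr''))
  · exact hmin ⟨htr'', (min_le_left _ _).trans hge⟩

theorem exists_weightedRangeProj_eq_add_smul [Nonempty n] (hc : ∀ p, 0 ≤ c p) (hε : 0 < ε)
    (hcard : ∑ p, c p * Fintype.card (m p) = κ * Fintype.card n)
    (hM : ∀ p, Function.Injective (M p).mulVec) :
    ∃ h : Matrix n n 𝕜, Function.Injective h.mulVec ∧ (hᴴ * h).trace = 1 ∧
      weightedRangeProj c (fun p => h * M p) =
        κ • 1 + (ε / gramDet h) • (1 - (Fintype.card n : ℝ) • (h * hᴴ)) := by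
  obtain ⟨h, hh, htr, hmin⟩ := exists_forall_kempfNessPotential_le (κ := κ) hc hε hcard hM
  refine ⟨h, hh, htr, ?_⟩
  set G : Matrix n n 𝕜 := weightedRangeProj c (fun p => h * M p) - κ • 1 -
    (ε / gramDet h) • (1 - (Fintype.card n : ℝ) • (h * hᴴ)) with hG
  have hGherm : G.IsHermitian := by
    have hsmul (a : ℝ) {A : Matrix n n 𝕜} (hA : A.IsHermitian) : (a • A).IsHermitian :=
      hA.smul (IsSelfAdjoint.all a)
    exact ((isHermitian_weightedRangeProj.sub (hsmul κ isHermitian_one)).sub (hsmul _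
      (isHermitian_one.sub (hsmul _ (isHermitian_mul_conjTranspose_self h)))))
  have h0 : (1 + (0 : ℝ) • G) * h = h := by rw [zero_smul, add_zero, Matrix.one_mul]
  have hloc : IsLocalMin (fun s : ℝ => kempfNessPotential c κ ε M ((1 + s • G) * h)) 0 := by
    have hcont : Continuous fun s : ℝ => gramDet ((1 + s • G) * h) :=
      continuous_gramDet.comp (by fun_prop)
    have hpos : ∀ᶠ s : ℝ in 𝓝 0, 0 < gramDet ((1 + s • G) * h) :=
      hcont.continuousAt.eventually_const_lt (by simpa only [h0] using gramDet_pos_iff.2 hh)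
    filter_upwards [hpos] with s hs
    rw [h0]
    exact hmin _ (gramDet_pos_iff.1 hs)
  have hzero := hloc.hasDerivAt_eq_zero (hasDerivAt_kempfNessPotential hGherm hM hh htr)
  have hGG : (Gᴴ * G).trace = 0 := by
    have hre : RCLike.re (Gᴴ * G).trace = 0 := by
      rw [hGherm.eq]
      linarith
    exact RCLike.ext (by simpa using hre) (by simpa using
      (RCLike.nonneg_iff.1 (posSemidef_conjTranspose_mul_self G).trace_nonneg).2)
  have hG0 : G = 0 := trace_conjTranspose_mul_self_eq_zero_iff.1 hGG
  rw [hG, sub_sub, sub_eq_zero] at hG0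
  exact hG0

end Potential

section KempfNess

variable {𝕜 P n : Type*} {m : P → Type*} [RCLike 𝕜] [Fintype P] [Fintype n] [DecidableEq n]
  [∀ p, Fintype (m p)] {c : P → ℝ} {κ : ℝ} {M : ∀ p, Matrix n (m p) 𝕜}

theorem IsSemistable.re_trace_mul_sub_nonneg (hss : IsSemistable c κ M) (hc : ∀ p, 0 ≤ c p)
    {Q : P → Matrix n n 𝕜} (hQ : ∀ p, IsStarProjection (Q p)) {h R : Matrix n n 𝕜}
    (hQM : ∀ p, Q p * (h * M p) = h * M p) (hR : IsStarProjection R) (hRh : R * h = h)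
    (hRtr : R.trace = (h.rank : 𝕜)) :
    0 ≤ RCLike.re (R * (∑ p, c p • Q p - κ • 1)).trace := by
  have hle (p : P) : ((h * M p).rank : ℝ) ≤ RCLike.re (R * Q p).trace := by
    have hRhM : R * (h * M p) = h * M p := by rw [← Matrix.mul_assoc, hRh]
    have := (RCLike.le_iff_re_im.1
      (rank_le_trace_mul_of_isStarProjection hR (hQ p) hRhM (hQM p))).1
    rwa [RCLike.natCast_re] at this
  have hexp : RCLike.re (R * (∑ p, c p • Q p - κ • 1)).trace =
      ∑ p, c p * RCLike.re (R * Q p).trace - κ * h.rank := by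
    simp only [Matrix.mul_sub, Matrix.mul_smul, Matrix.mul_one, Matrix.mul_sum, trace_sub,
      trace_smul, trace_sum, map_sub, map_sum, RCLike.smul_re, hRtr, RCLike.natCast_re]
  rw [hexp, sub_nonneg]
  refine (hss h).trans ?_
  gcongr with p
  exacts [hc p, hle p]

theorem tendsto_zero_of_tendsto_mul_of_nonneg {ι : Type*} {l : Filter ι} [l.NeBot] {e d : ι → ℝ}
    {a L : ℝ} (he : ∀ k, 0 ≤ e k) (hd : Tendsto d l (𝓝 a)) (ha : a < 0) (hL : 0 ≤ L)
    (h : Tendsto (fun k => e k * d k) l (𝓝 L)) : Tendsto e l (𝓝 0) := by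
  have hlim : Tendsto e l (𝓝 (L / a)) := (h.div hd ha.ne).congr' <| by
    filter_upwards [hd.eventually_ne ha.ne] with k hk
    exact mul_div_cancel_right₀ _ hk
  have hzero : L / a = 0 :=
    (div_nonpos_of_nonneg_of_nonpos hL ha.le).antisymm (ge_of_tendsto' hlim he)
  rwa [hzero] at hlim

variable [∀ p, DecidableEq (m p)]

/- If `h k` degenerates, the projection onto the range of its limit is a test for semistability, on
which the error term `e k • (1 - card n • h k * (h k)ᴴ)` is asymptotically negative. -/
theorem IsSemistable.tendsto_zero_of_rank_lt (hss : IsSemistable c κ M) (hc : ∀ p, 0 ≤ c p)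
    (hM : ∀ p, Function.Injective (M p).mulVec) {ι : Type*} {l : Filter ι} [l.NeBot]
    {h : ι → Matrix n n 𝕜} {e : ι → ℝ} (hh : ∀ k, Function.Injective (h k).mulVec)
    (htr : ∀ k, ((h k)ᴴ * h k).trace = 1) (he : ∀ k, 0 ≤ e k)
    (hbal : ∀ k, weightedRangeProj c (fun p => h k * M p) =
      κ • 1 + e k • (1 - (Fintype.card n : ℝ) • (h k * (h k)ᴴ)))
    {h₀ : Matrix n n 𝕜} (hlim : Tendsto h l (𝓝 h₀)) (hrank : h₀.rank < Fintype.card n)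
    {Q : P → Matrix n n 𝕜} (hQ : ∀ p, IsStarProjection (Q p))
    (hQlim : ∀ p, Tendsto (fun k => rangeProj (h k * M p)) l (𝓝 (Q p))) : Tendsto e l (𝓝 0) := by
  have hQM (p : P) : Q p * (h₀ * M p) = h₀ * M p := by
    have hhM : Tendsto (fun k => h k * M p) l (𝓝 (h₀ * M p)) :=
      ((by fun_prop : Continuous fun A : Matrix n n 𝕜 => A * M p).tendsto h₀).comp hlim
    have hprod : Tendsto (fun k => rangeProj (h k * M p) * (h k * M p)) l
        (𝓝 (Q p * (h₀ * M p))) := (((by fun_prop : Continuous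
          fun A : Matrix n n 𝕜 × Matrix n (m p) 𝕜 => A.1 * A.2).tendsto _).comp
            ((hQlim p).prodMk_nhds hhM))
    refine tendsto_nhds_unique hprod (hhM.congr fun k => ?_)
    exact (rangeProj_mul_self (mulVec_injective_mul (hh k) (hM p))).symm
  obtain ⟨R, -, hR, hRh, -, hRtr⟩ := exists_isStarProjection_range h₀
  have htr₀ : (h₀ᴴ * h₀).trace = 1 :=
    isCompact_setOf_trace_conjTranspose_mul_self_eq_one.isClosed.mem_of_tendsto hlim
      (Eventually.of_forall htr)
  let d (A : Matrix n n 𝕜) : ℝ := h₀.rank - Fintype.card n * RCLike.re (R * (A * Aᴴ)).trace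
  have hd : Continuous d := by fun_prop
  have hd₀ : d h₀ = h₀.rank - Fintype.card n := by
    simp only [d, ← Matrix.mul_assoc, hRh, trace_mul_comm h₀, htr₀, RCLike.one_re, mul_one]
  have hed (k : ι) : RCLike.re (R * (weightedRangeProj c (fun p => h k * M p) - κ • 1)).trace =
      e k * d (h k) := by
    rw [hbal, add_sub_cancel_left]
    simp only [d, Matrix.mul_smul, Matrix.mul_sub, Matrix.mul_one, trace_smul, trace_sub, hRtr,
      map_sub, RCLike.smul_re, RCLike.natCast_re]
  have hG : Tendsto (fun k => e k * d (h k)) l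
      (𝓝 (RCLike.re (R * (∑ p, c p • Q p - κ • 1)).trace)) := by
    simp only [← hed]
    have hcont : Continuous fun A : Matrix n n 𝕜 => RCLike.re (R * (A - κ • 1)).trace := by fun_prop
    exact (hcont.tendsto _).comp (tendsto_finsetSum _ fun p _ => (hQlim p).const_smul (c p))
  refine tendsto_zero_of_tendsto_mul_of_nonneg he ((hd.tendsto h₀).comp hlim) ?_
    (hss.re_trace_mul_sub_nonneg hc hQ hQM hR hRh hRtr) hG
  rw [hd₀, sub_neg]
  exact_mod_cast hrank

theorem IsSemistable.smul_one_mem_closure [Nonempty n] (hss : IsSemistable c κ M)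
    (hc : ∀ p, 0 ≤ c p) (hcard : ∑ p, c p * Fintype.card (m p) = κ * Fintype.card n)
    (hM : ∀ p, Function.Injective (M p).mulVec) :
    (κ • 1 : Matrix n n 𝕜) ∈ closure {W | ∃ h : Matrix n n 𝕜, Function.Injective h.mulVec ∧
      weightedRangeProj c (fun p => h * M p) = W} := by
  choose h hh htr hbal using fun k : ℕ =>
    exists_weightedRangeProj_eq_add_smul (κ := κ) hc (Nat.one_div_pos_of_nat (α := ℝ) (n := k))
      hcard hM
  let l : Filter ℕ := hyperfilter ℕ
  obtain ⟨h₀, -, hlim⟩ := isCompact_setOf_trace_conjTranspose_mul_self_eq_one.ultrafilter_le_nhds'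
    ((hyperfilter ℕ).map h) (Ultrafilter.mem_map.2 (univ_mem' htr))
  choose Q hQ hQlim using fun p => isCompact_setOf_isStarProjection.ultrafilter_le_nhds'
    ((hyperfilter ℕ).map fun k => rangeProj (h k * M p))
    (Ultrafilter.mem_map.2 <| univ_mem' fun k => isStarProjection_rangeProj (h k * M p))
  have he : Tendsto (fun k : ℕ => 1 / ((k : ℝ) + 1) / gramDet (h k)) l (𝓝 0) := by
    rcases (rank_le_card_width h₀).lt_or_eq with hlt | heq
    · exact hss.tendsto_zero_of_rank_lt hc hM hh htr (fun k => div_nonneg (by positivity)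
        (gramDet_pos_iff.2 (hh k)).le) hbal hlim hlt hQ hQlim
    · have hinj : Function.Injective h₀.mulVec :=
        LinearMap.injective_iff_surjective.2 <| LinearMap.range_eq_top.1 <|
          Submodule.eq_top_of_finrank_eq (heq.trans (Module.finrank_fintype_fun_eq_card 𝕜).symm)
      have hD : gramDet h₀ ≠ 0 := (gramDet_pos_iff.2 hinj).ne'
      simpa using! (tendsto_one_div_add_atTop_nhds_zero_nat.mono_left
        Nat.hyperfilter_le_atTop).div ((continuous_gramDet.tendsto h₀).comp hlim) hD
  have hW : Tendsto (fun k => weightedRangeProj c fun p => h k * M p) l (𝓝 (κ • 1)) := by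
    simp only [hbal]
    have hcont : Continuous fun A : Matrix n n 𝕜 => 1 - (Fintype.card n : ℝ) • (A * Aᴴ) := by
      fun_prop
    simpa using (he.smul ((hcont.tendsto h₀).comp hlim)).const_add (κ • (1 : Matrix n n 𝕜))
  exact mem_closure_of_tendsto hW (Eventually.of_forall fun k => ⟨h k, hh k, rfl⟩)

end KempfNess

section Flags

/-- The columns of `g` with index at most `a`; as `a` varies, their spans form the flag of `g`. -/
def leadingCols {n K : Type*} [LE n] (g : Matrix n n K) (a : n) : Matrix n {l // l ≤ a} K :=
  g.submatrix id Subtype.val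

variable {𝕜 n : Type*} [RCLike 𝕜] [Fintype n] [LinearOrder n]

theorem mulVec_leadingCols_injective {K : Type*} [Field K] {g : Matrix n n K} (hg : g.det ≠ 0)
    (a : n) : Function.Injective (leadingCols g a).mulVec := by
  have hcols := mulVec_injective_iff.1 (mulVec_injective_of_det_ne_zero hg)
  exact mulVec_injective_iff.2 (hcols.comp _ Subtype.val_injective)

theorem exists_unitary_mul_isUpperTriangular [LocallyFiniteOrderBot n] (g : Matrix n n 𝕜) :
    ∃ U ∈ unitaryGroup n 𝕜, ∃ T : Matrix n n 𝕜, T.IsUpperTriangular ∧ g = U * T := by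
  let f (j : n) : EuclideanSpace 𝕜 n := WithLp.toLp 2 (g.col j)
  let e := EuclideanSpace.basisFun n 𝕜
  let b := InnerProductSpace.gramSchmidtOrthonormalBasis (𝕜 := 𝕜) finrank_euclideanSpace f
  refine ⟨e.toBasis.toMatrix b, e.toMatrix_orthonormalBasis_mem_unitary b, b.toBasis.toMatrix f,
    InnerProductSpace.gramSchmidtOrthonormalBasis_inv_isUpperTriangular _ f, ?_⟩
  have hmul := e.toBasis.toMatrix_mul_toMatrix b.toBasis f
  rw [b.coe_toBasis] at hmul
  rw [hmul]
  ext i j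
  simp [Module.Basis.toMatrix_apply, e, f]

theorem leadingCols_mul_of_isUpperTriangular (U : Matrix n n 𝕜) {T : Matrix n n 𝕜}
    (hT : T.IsUpperTriangular) (a : n) :
    leadingCols (U * T) a =
      leadingCols U a *
        T.submatrix (Subtype.val : {l // l ≤ a} → n) (Subtype.val : {l // l ≤ a} → n) := by
  ext i l
  simp only [leadingCols, submatrix_apply, mul_apply, id]
  rw [← Fintype.sum_subtype_add_sum_subtype (· ≤ a), add_eq_left]
  exact Finset.sum_eq_zero fun k _ => by rw [hT (l.2.trans_lt (not_le.1 k.2)), mul_zero]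

theorem exists_unitary_rangeProj_leadingCols_eq [LocallyFiniteOrderBot n] {g : Matrix n n 𝕜}
    (hg : g.det ≠ 0) :
    ∃ U ∈ unitaryGroup n 𝕜, ∀ a, rangeProj (leadingCols g a) = rangeProj (leadingCols U a) := by
  obtain ⟨U, hU, T, hT, rfl⟩ := exists_unitary_mul_isUpperTriangular g
  refine ⟨U, hU, fun a => ?_⟩
  have hdiag (l : n) : T l l ≠ 0 := by
    have h := right_ne_zero_of_mul (det_mul U T ▸ hg)
    rw [det_of_isUpperTriangular hT] at h
    exact Finset.prod_ne_zero_iff.1 h l (Finset.mem_univ l)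
  have hblock : (T.submatrix (Subtype.val : {l // l ≤ a} → n) Subtype.val).IsUpperTriangular :=
    fun _ _ h => hT h
  rw [leadingCols_mul_of_isUpperTriangular U hT, rangeProj_mul_of_isUnit]
  rw [det_of_isUpperTriangular hblock, isUnit_iff_ne_zero]
  exact Finset.prod_ne_zero_iff.2 fun l _ => hdiag l

theorem rangeProj_leadingCols_of_mem_unitaryGroup {U : Matrix n n 𝕜} (hU : U ∈ unitaryGroup n 𝕜)
    (a : n) :
    rangeProj (leadingCols U a) = U * diagonal (fun l => if l ≤ a then 1 else 0) * Uᴴ := by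
  have hgram : (leadingCols U a)ᴴ * leadingCols U a = 1 := by
    have h : Uᴴ * U = 1 := mem_unitaryGroup_iff'.1 hU
    ext k l
    simpa [leadingCols, mul_apply, one_apply, Subtype.ext_iff] using congrFun₂ h k l
  rw [rangeProj, hgram, inv_one, Matrix.mul_one]
  ext i j
  rw [mul_apply, mul_apply]
  simp only [leadingCols, conjTranspose_apply, submatrix_apply, id, mul_diagonal, mul_ite, mul_one,
    mul_zero, ite_mul, zero_mul, ← Finset.sum_filter]
  exact (Finset.sum_subtype _ (by simp) fun l => U i l * star (U j l)).symm

end Flags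

section HermitianZeroSum

variable {𝕜 I n : Type*} [RCLike 𝕜] [Fintype I] [Fintype n] [DecidableEq n]

/-- The Hermitian matrix `U * diag(a) * Uᴴ`, with real spectrum `a` when `U` is unitary. -/
noncomputable def conjDiagonal (U : Matrix n n 𝕜) (a : n → ℝ) : Matrix n n 𝕜 :=
  U * diagonal (fun l => (a l : 𝕜)) * Uᴴ

theorem isHermitian_conjDiagonal (U : Matrix n n 𝕜) (a : n → ℝ) :
    (conjDiagonal U a).IsHermitian :=
  isHermitian_mul_mul_conjTranspose U (isHermitian_diagonal_iff.2 fun l => RCLike.conj_ofReal (a l))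

theorem conjDiagonal_mul (V U : Matrix n n 𝕜) (a : n → ℝ) :
    conjDiagonal (V * U) a = V * conjDiagonal U a * Vᴴ := by
  simp only [conjDiagonal, conjTranspose_mul, Matrix.mul_assoc]

theorem conjDiagonal_smul (U : Matrix n n 𝕜) (t : ℝ) (a : n → ℝ) :
    conjDiagonal U (t • a) = t • conjDiagonal U a := by
  have h : diagonal (fun l => (((t • a) l : ℝ) : 𝕜)) = t • diagonal (fun l => (a l : 𝕜)) := by
    ext i j
    by_cases hij : i = j <;> simp [hij, RCLike.real_smul_eq_coe_mul]
  rw [conjDiagonal, h, Matrix.mul_smul, Matrix.smul_mul, conjDiagonal]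

theorem trace_conjDiagonal {U : Matrix n n 𝕜} (hU : U ∈ unitaryGroup n 𝕜) (a : n → ℝ) :
    (conjDiagonal U a).trace = ((∑ l, a l : ℝ) : 𝕜) := by
  have h : Uᴴ * U = 1 := mem_unitaryGroup_iff'.1 hU
  rw [conjDiagonal, trace_mul_comm, ← Matrix.mul_assoc, h, Matrix.one_mul, trace_diagonal,
    RCLike.ofReal_sum]

theorem charpoly_conjDiagonal {U : Matrix n n 𝕜} (hU : U ∈ unitaryGroup n 𝕜) (a : n → ℝ) :
    (conjDiagonal U a).charpoly = ∏ l, (Polynomial.X - Polynomial.C (a l : 𝕜)) := by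
  have h : Uᴴ * U = 1 := mem_unitaryGroup_iff'.1 hU
  rw [conjDiagonal, charpoly_mul_comm, ← Matrix.mul_assoc, h, Matrix.one_mul, charpoly_diagonal]

/-- Solvability of Horn's problem: there are Hermitian matrices over `𝕜` with spectra `α i`,
encoded as unitary conjugates of diagonal matrices, which sum to zero. -/
def HasHermitianZeroSum (𝕜 : Type*) [RCLike 𝕜] (α : I → n → ℝ) : Prop :=
  ∃ U : I → Matrix n n 𝕜, (∀ i, U i ∈ unitaryGroup n 𝕜) ∧ ∑ i, conjDiagonal (U i) (α i) = 0

theorem HasHermitianZeroSum.sum_eq_zero {α : I → n → ℝ} (h : HasHermitianZeroSum 𝕜 α) :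
    ∑ i, ∑ l, α i l = 0 := by
  obtain ⟨U, hU, hsum⟩ := h
  have htrace := congrArg trace hsum
  simp only [trace_sum, trace_conjDiagonal (hU _), trace_zero, ← RCLike.ofReal_sum] at htrace
  exact_mod_cast htrace

end HermitianZeroSum

section FlagSemistability

variable {𝕜 I : Type*} [RCLike 𝕜] {d : ℕ}

/-- The proper steps of the flags spanned by the columns of the matrices `g i`. -/
def flagSteps {K : Type*} (g : I → Matrix (Fin (d + 1)) (Fin (d + 1)) K) (p : I × Fin d) :
    Matrix (Fin (d + 1)) {l // l ≤ p.2.castSucc} K :=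
  leadingCols (g p.1) p.2.castSucc

theorem continuous_flagSteps : Continuous (flagSteps (I := I) (d := d) (K := 𝕜)) :=
  continuous_pi fun p => (continuous_apply p.1).matrix_submatrix _ _

/-- The gaps `α i j - α i (j + 1)` between consecutive entries, which weight `flagSteps`. -/
def gaps (α : I → Fin (d + 1) → ℝ) (p : I × Fin d) : ℝ :=
  α p.1 p.2.castSucc - α p.1 p.2.succ

theorem gaps_nonneg {α : I → Fin (d + 1) → ℝ} (hα : ∀ i, Antitone (α i)) (p : I × Fin d) :
    0 ≤ gaps α p :=
  sub_nonneg.2 (hα p.1 (Fin.castSucc_lt_succ (i := p.2)).le)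

theorem sum_sub_succ_mul_ite_le_castSucc (a : Fin (d + 1) → ℝ) (l : Fin (d + 1)) :
    ∑ j : Fin d, (a j.castSucc - a j.succ) * (if l ≤ j.castSucc then 1 else 0) =
      a l - a (Fin.last d) := by
  induction l using Fin.reverseInduction with
  | last => simp [Fin.last_le_iff, Fin.castSucc_ne_last]
  | cast i ih =>
    have hsplit (j : Fin d) : (if i.castSucc ≤ j.castSucc then 1 else 0 : ℝ) =
        (if i.succ ≤ j.castSucc then 1 else 0) + if j = i then 1 else 0 := by
      simp only [Fin.succ_le_castSucc_iff, Fin.castSucc_le_castSucc_iff]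
      rcases lt_trichotomy i j with h | rfl | h
      · simp [h, h.le, h.ne']
      · simp
      · simp [h.not_gt, h.not_ge, h.ne]
    simp only [hsplit, mul_add, Finset.sum_add_distrib, ih]
    simp

variable [Fintype I]

/-- Minus the sum of the last entries; it is the slope of the flag configuration weighted by
`gaps α` when all the entries of `α` sum to zero. -/
def flagSlope (α : I → Fin (d + 1) → ℝ) : ℝ :=
  -∑ i, α i (Fin.last d)

theorem sum_gaps_mul_card (α : I → Fin (d + 1) → ℝ) (hα : ∑ i, ∑ l, α i l = 0) :
    ∑ p, gaps α p * Fintype.card {l // l ≤ p.2.castSucc} =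
      flagSlope α * Fintype.card (Fin (d + 1)) := by
  have hcard (j : Fin d) : (Fintype.card {l // l ≤ j.castSucc} : ℝ) =
      ∑ l, if l ≤ j.castSucc then 1 else 0 := by
    rw [Fintype.card_subtype, Finset.sum_boole]
  have hflag (i : I) : ∑ j : Fin d, gaps α (i, j) * Fintype.card {l // l ≤ j.castSucc} =
      ∑ l, α i l - α i (Fin.last d) * Fintype.card (Fin (d + 1)) := by
    simp only [gaps, hcard, Finset.mul_sum]
    rw [Finset.sum_comm]
    simp only [sum_sub_succ_mul_ite_le_castSucc, Finset.sum_sub_distrib, Finset.sum_const,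
      Finset.card_univ, nsmul_eq_mul, mul_comm]
  rw [Fintype.sum_prod_type]
  simp only [hflag, Finset.sum_sub_distrib, hα, flagSlope, neg_mul, ← Finset.sum_mul, zero_sub]

theorem sum_smul_rangeProj_leadingCols {U : Matrix (Fin (d + 1)) (Fin (d + 1)) 𝕜}
    (hU : U ∈ unitaryGroup _ 𝕜) (a : Fin (d + 1) → ℝ) :
    ∑ j : Fin d, (a j.castSucc - a j.succ) • rangeProj (leadingCols U j.castSucc) =
      conjDiagonal U a - a (Fin.last d) • 1 := by
  have hdiag : ∑ j : Fin d, (a j.castSucc - a j.succ) •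
      diagonal (fun l => if l ≤ j.castSucc then (1 : 𝕜) else 0) =
        diagonal (fun l => (a l : 𝕜)) - a (Fin.last d) • 1 := by
    ext k l
    by_cases hkl : k = l
    · subst hkl
      have h := congrArg (RCLike.ofReal : ℝ → 𝕜) (sum_sub_succ_mul_ite_le_castSucc a k)
      push_cast at h
      simpa [Matrix.sum_apply, RCLike.real_smul_eq_coe_mul] using h
    · simp [Matrix.sum_apply, hkl]
  have hUU : U * Uᴴ = 1 := mem_unitaryGroup_iff.1 hU
  have hconj (c : ℝ) (D : Matrix (Fin (d + 1)) (Fin (d + 1)) 𝕜) :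
      c • (U * D * Uᴴ) = U * (c • D) * Uᴴ := by
    rw [Matrix.mul_smul, Matrix.smul_mul]
  simp only [rangeProj_leadingCols_of_mem_unitaryGroup hU, hconj]
  rw [← Matrix.sum_mul, ← Matrix.mul_sum, hdiag, Matrix.mul_sub, Matrix.sub_mul, Matrix.mul_smul,
    Matrix.mul_one, Matrix.smul_mul, hUU, conjDiagonal]

theorem weightedRangeProj_flagSteps {U : I → Matrix (Fin (d + 1)) (Fin (d + 1)) 𝕜}
    (hU : ∀ i, U i ∈ unitaryGroup _ 𝕜) (α : I → Fin (d + 1) → ℝ) :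
    weightedRangeProj (gaps α) (flagSteps U) =
      ∑ i, conjDiagonal (U i) (α i) + flagSlope α • 1 := by
  simp only [weightedRangeProj, flagSteps, gaps, Fintype.sum_prod_type,
    sum_smul_rangeProj_leadingCols (hU _), Finset.sum_sub_distrib, ← Finset.sum_smul, flagSlope,
    neg_smul, ← sub_eq_add_neg]

theorem eventually_isSemistable_flagSteps {α : I → Fin (d + 1) → ℝ} (hα : ∀ i, Antitone (α i))
    {U : I → Matrix (Fin (d + 1)) (Fin (d + 1)) 𝕜} (hU : ∀ i, U i ∈ unitaryGroup _ 𝕜)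
    (hsum : ∑ i, conjDiagonal (U i) (α i) = 0) :
    ∀ᶠ g in 𝓝 U, IsSemistable (gaps α) (flagSlope α) (flagSteps g) := by
  refine continuous_flagSteps.continuousAt.eventually (eventually_isSemistable (gaps_nonneg hα)
    (fun p => mulVec_leadingCols_injective (UnitaryGroup.det_isUnit ⟨_, hU p.1⟩).ne_zero _) ?_)
  rw [weightedRangeProj_flagSteps hU, hsum, zero_add]

theorem hasHermitianZeroSum_of_isSemistable {α : I → Fin (d + 1) → ℝ} (hα : ∀ i, Antitone (α i))
    (hzero : ∑ i, ∑ l, α i l = 0) {g : I → Matrix (Fin (d + 1)) (Fin (d + 1)) 𝕜}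
    (hg : ∀ i, (g i).det ≠ 0) (hss : IsSemistable (gaps α) (flagSlope α) (flagSteps g)) :
    HasHermitianZeroSum 𝕜 α := by
  let sumMap (U : I → Matrix (Fin (d + 1)) (Fin (d + 1)) 𝕜) :=
    ∑ i, conjDiagonal (U i) (α i) + flagSlope α • 1
  have hcont : Continuous sumMap := by
    unfold sumMap conjDiagonal
    fun_prop
  have hclosed : IsClosed (sumMap '' Set.univ.pi fun _ => unitaryGroup (Fin (d + 1)) 𝕜) :=
    ((isCompact_univ_pi fun _ => isCompact_unitaryGroup).image hcont).isClosed
  have hmem := hss.smul_one_mem_closure (gaps_nonneg hα) (sum_gaps_mul_card α hzero)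
    fun p => mulVec_leadingCols_injective (hg p.1) _
  suffices hsub : {W | ∃ h : Matrix (Fin (d + 1)) (Fin (d + 1)) 𝕜, Function.Injective h.mulVec ∧
      weightedRangeProj (gaps α) (fun p => h * flagSteps g p) = W} ⊆ sumMap '' _ by
    obtain ⟨U, hU, hsum⟩ := closure_minimal hsub hclosed hmem
    exact ⟨U, fun i => hU i trivial, add_eq_right.1 hsum⟩
  rintro _ ⟨h, hh, rfl⟩
  have hdet (i : I) : (h * g i).det ≠ 0 := by
    rw [det_mul]
    exact mul_ne_zero
      ((isUnit_iff_isUnit_det h).1 (mulVec_injective_iff_isUnit.1 hh)).ne_zero (hg i)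
  choose U hU hrange using fun i => exists_unitary_rangeProj_leadingCols_eq (hdet i)
  refine ⟨U, fun i _ => hU i, (weightedRangeProj_flagSteps hU α).symm.trans ?_⟩
  exact Finset.sum_congr rfl fun p _ => congrArg _ (hrange p.1 _).symm

theorem exists_mem_closure_ringEquiv_map {I n : Type*} [Countable I] [Countable n]
    (U V : I → Matrix n n ℂ) :
    ∃ g : I → Matrix n n ℂ, U ∈ closure (Set.range fun (τ : ℂ ≃+* ℂ) i => (g i).map τ) ∧
      V ∈ closure (Set.range fun (τ : ℂ ≃+* ℂ) i => (g i).map τ) := by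
  let family (w : I × n × n → ℂ) (i : I) : Matrix n n ℂ := of fun k l => w (i, k, l)
  have hcont : Continuous family := by fun_prop
  obtain ⟨w, hU, hV⟩ := exists_mem_closure_ringEquiv_comp
    (fun x : I × n × n => U x.1 x.2.1 x.2.2) fun x => V x.1 x.2.1 x.2.2
  have hmaps : Set.MapsTo family (Set.range fun τ : ℂ ≃+* ℂ => τ ∘ w)
      (Set.range fun (τ : ℂ ≃+* ℂ) i => (family w i).map τ) :=
    Set.mapsTo_range_iff.2 fun τ => ⟨τ, rfl⟩
  exact ⟨family w, map_mem_closure hcont hU hmaps, map_mem_closure hcont hV hmaps⟩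

-- Ranks and determinants only see `g` up to field automorphisms, so `g` behaves like its conjugates
-- close to `U`.
theorem isSemistable_flagSteps_of_mem_closure {α : I → Fin (d + 1) → ℝ}
    (hα : ∀ i, Antitone (α i)) {U g : I → Matrix (Fin (d + 1)) (Fin (d + 1)) ℂ}
    (hU : ∀ i, U i ∈ unitaryGroup _ ℂ) (hsum : ∑ i, conjDiagonal (U i) (α i) = 0)
    (hg : U ∈ closure (Set.range fun (τ : ℂ ≃+* ℂ) i => (g i).map τ)) :
    (∀ i, (g i).det ≠ 0) ∧ IsSemistable (gaps α) (flagSlope α) (flagSteps g) := by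
  have hdet : ∀ᶠ h in 𝓝 U, ∀ i, (h i).det ≠ 0 := eventually_all.2 fun i =>
    (continuous_apply i).matrix_det.continuousAt.eventually_ne
      (UnitaryGroup.det_isUnit ⟨_, hU i⟩).ne_zero
  obtain ⟨_, ⟨τ, rfl⟩, hτdet, hτss⟩ := ((mem_closure_iff_frequently.1 hg).and_eventually
    (hdet.and (eventually_isSemistable_flagSteps hα hU hsum))).exists
  refine ⟨fun i hi => hτdet i ?_, (isSemistable_map_ringEquiv_iff τ).1 hτss⟩
  exact (τ.map_det (g i)).symm.trans (by rw [hi, map_zero])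

theorem isSemistable_flagSteps_add {K : Type*} [Field K] {α β : I → Fin (d + 1) → ℝ} {a b : ℝ}
    {g : I → Matrix (Fin (d + 1)) (Fin (d + 1)) K}
    (hα : IsSemistable (gaps α) (flagSlope α) (flagSteps g))
    (hβ : IsSemistable (gaps β) (flagSlope β) (flagSteps g)) (ha : 0 ≤ a) (hb : 0 ≤ b) :
    IsSemistable (gaps (a • α + b • β)) (flagSlope (a • α + b • β)) (flagSteps g) := by
  intro y
  calc flagSlope (a • α + b • β) * y.rank
      = a * (flagSlope α * y.rank) + b * (flagSlope β * y.rank) := by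
        simp only [flagSlope, Pi.add_apply, Pi.smul_apply, smul_eq_mul, Finset.sum_add_distrib,
          ← Finset.mul_sum]
        ring
    _ ≤ a * ∑ p, gaps α p * (y * flagSteps g p).rank +
          b * ∑ p, gaps β p * (y * flagSteps g p).rank := by
        gcongr
        exacts [hα y, hβ y]
    _ = ∑ p, gaps (a • α + b • β) p * (y * flagSteps g p).rank := by
        rw [Finset.mul_sum, Finset.mul_sum, ← Finset.sum_add_distrib]
        refine Finset.sum_congr rfl fun p _ => ?_
        simp only [gaps, Pi.add_apply, Pi.smul_apply, smul_eq_mul]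
        ring

theorem convex_setOf_hasHermitianZeroSum :
    Convex ℝ {α : I → Fin (d + 1) → ℝ | (∀ i, Antitone (α i)) ∧ HasHermitianZeroSum ℂ α} := by
  rintro α ⟨hα, hα'⟩ β ⟨hβ, hβ'⟩ a b ha hb -
  have hanti (i : I) : Antitone ((a • α + b • β) i) :=
    ((hα i).const_mul ha).add ((hβ i).const_mul hb)
  have hzero : ∑ i, ∑ l, (a • α + b • β) i l = 0 := by
    simp [Finset.sum_add_distrib, ← Finset.mul_sum, hα'.sum_eq_zero, hβ'.sum_eq_zero]
  obtain ⟨U, hU, hUsum⟩ := hα'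
  obtain ⟨V, hV, hVsum⟩ := hβ'
  obtain ⟨g, hgU, hgV⟩ := exists_mem_closure_ringEquiv_map U V
  obtain ⟨hg, hssα⟩ := isSemistable_flagSteps_of_mem_closure hα hU hUsum hgU
  obtain ⟨-, hssβ⟩ := isSemistable_flagSteps_of_mem_closure hβ hV hVsum hgV
  exact ⟨hanti, hasHermitianZeroSum_of_isSemistable hanti hzero hg
    (isSemistable_flagSteps_add hssα hssβ ha hb)⟩

end FlagSemistability

section SpectralDecomposition

theorem exists_perm_comp_eq_of_map_univ_eq {ι β : Type*} [Fintype ι] {f g : ι → β}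
    (h : Finset.univ.val.map f = Finset.univ.val.map g) :
    ∃ σ : Equiv.Perm ι, ∀ i, f (σ i) = g i := by
  classical
  have hcard (x : β) : Fintype.card {i // g i = x} = Fintype.card {i // f i = x} := by
    have hcount := congrArg (Multiset.count x) h
    simp only [Multiset.count_map, eq_comm (a := x)] at hcount
    rw [Fintype.card_subtype, Fintype.card_subtype]
    exact hcount.symm
  exact ⟨Equiv.ofFiberEquiv fun x => Fintype.equivOfCardEq (hcard x),
    fun i => Equiv.ofFiberEquiv_map _ i⟩

variable {𝕜 n : Type*} [RCLike 𝕜] [Fintype n] [DecidableEq n]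

theorem submatrix_id_equiv_mem_unitaryGroup {U : Matrix n n 𝕜} (hU : U ∈ unitaryGroup n 𝕜)
    (σ : Equiv.Perm n) : U.submatrix id σ ∈ unitaryGroup n 𝕜 := by
  have h : U * Uᴴ = 1 := mem_unitaryGroup_iff.1 hU
  rw [mem_unitaryGroup_iff, star_eq_conjTranspose, conjTranspose_submatrix, submatrix_mul_equiv, h,
    submatrix_id_id]

theorem conjDiagonal_submatrix_id_comp (U : Matrix n n 𝕜) (a : n → ℝ) (σ : Equiv.Perm n) :
    conjDiagonal (U.submatrix id σ) (a ∘ σ) = conjDiagonal U a := by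
  have h : diagonal (fun l => ((a ∘ σ) l : 𝕜)) = (diagonal fun l => (a l : 𝕜)).submatrix σ σ :=
    (submatrix_diagonal_equiv (fun l => (a l : 𝕜)) σ).symm
  rw [conjDiagonal, h, conjTranspose_submatrix, submatrix_mul_equiv, submatrix_mul_equiv,
    submatrix_id_id, conjDiagonal]

theorem exists_conjDiagonal_eigenvalues_comp_eq {A : Matrix n n 𝕜} (hA : A.IsHermitian)
    (σ : Equiv.Perm n) :
    ∃ U ∈ unitaryGroup n 𝕜, conjDiagonal U (hA.eigenvalues ∘ σ) = A := by
  refine ⟨_, submatrix_id_equiv_mem_unitaryGroup hA.eigenvectorUnitary.2 σ, ?_⟩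
  rw [conjDiagonal_submatrix_id_comp]
  conv_rhs => rw [hA.spectral_theorem, Unitary.conjStarAlgAut_apply]
  rfl

theorem exists_antitone_conjDiagonal_eq {k : ℕ} {A : Matrix (Fin k) (Fin k) 𝕜}
    (hA : A.IsHermitian) :
    ∃ a : Fin k → ℝ, Antitone a ∧ ∃ U ∈ unitaryGroup (Fin k) 𝕜, conjDiagonal U a = A := by
  refine ⟨hA.eigenvalues ∘ Tuple.sort (-hA.eigenvalues), fun i j hij => ?_,
    exists_conjDiagonal_eigenvalues_comp_eq hA _⟩
  exact neg_le_neg_iff.1 (Tuple.monotone_sort (-hA.eigenvalues) hij)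

theorem map_eigenvalues_conjDiagonal {U : Matrix n n 𝕜} (hU : U ∈ unitaryGroup n 𝕜) (a : n → ℝ) :
    Finset.univ.val.map (isHermitian_conjDiagonal U a).eigenvalues = Finset.univ.val.map a := by
  have hroots : (conjDiagonal U a).charpoly.roots = Finset.univ.val.map fun l => (a l : 𝕜) := by
    rw [charpoly_conjDiagonal hU,
      ← Polynomial.roots_multiset_prod_X_sub_C (Finset.univ.val.map fun l => (a l : 𝕜)),
      Multiset.map_map]
    rfl
  have hre := congrArg (Multiset.map RCLike.re)
    ((isHermitian_conjDiagonal U a).roots_charpoly_eq_eigenvalues.symm.trans hroots)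
  simpa [Multiset.map_map, Function.comp_def] using hre

theorem mem_coadjointOrbit_iff {k : ℕ} {lam : Fin k → ℝ} (hsum : ∑ i, lam i = 0)
    {A : Matrix (Fin k) (Fin k) ℂ} :
    A ∈ coadjointOrbit lam ↔ ∃ U ∈ unitaryGroup (Fin k) ℂ, conjDiagonal U lam = A := by
  constructor
  · rintro ⟨-, hA, σ, hσ⟩
    obtain rfl : hA.eigenvalues ∘ σ = lam := funext hσ
    exact exists_conjDiagonal_eigenvalues_comp_eq hA σ
  · rintro ⟨U, hU, rfl⟩
    exact ⟨by rw [trace_conjDiagonal hU, hsum, RCLike.ofReal_zero], isHermitian_conjDiagonal U lam,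
      exists_perm_comp_eq_of_map_univ_eq (map_eigenvalues_conjDiagonal hU lam)⟩

end SpectralDecomposition

section Averaging

theorem const_average_mem_of_translates_mem {I : Type*} [Fintype I] [AddGroup I] {C : Set (I → ℝ)}
    (hC : Convex ℝ C) {t : I → ℝ} (ht : ∀ k, (fun i => t (i + k)) ∈ C) :
    (fun _ => (Fintype.card I : ℝ)⁻¹ * ∑ i, t i) ∈ C := by
  have hcard : (Fintype.card I : ℝ) ≠ 0 := Nat.cast_ne_zero.2 Fintype.card_ne_zero
  have hmem : ∑ k : I, (Fintype.card I : ℝ)⁻¹ • (fun i => t (i + k)) ∈ C :=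
    hC.sum_mem (fun _ _ => by positivity) (by simp [hcard]) fun k _ => ht k
  convert hmem using 1
  funext i
  simp only [Finset.sum_apply, Pi.smul_apply, smul_eq_mul, ← Finset.mul_sum]
  rw [← Equiv.sum_comp (Equiv.addLeft i) t, Equiv.coe_addLeft]

theorem HasHermitianZeroSum.comp_equiv {𝕜 I J n : Type*} [RCLike 𝕜] [Fintype I] [Fintype J]
    [Fintype n] [DecidableEq n] {α : I → n → ℝ} (h : HasHermitianZeroSum 𝕜 α) (e : J ≃ I) :
    HasHermitianZeroSum 𝕜 (α ∘ e) := by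
  obtain ⟨U, hU, hsum⟩ := h
  exact ⟨U ∘ e, fun j => hU (e j),
    (e.sum_comp fun i => conjDiagonal (U i) (α i)).trans hsum⟩

theorem HasHermitianZeroSum.exists_apply_eq {𝕜 I n : Type*} [RCLike 𝕜] [Fintype I] [Fintype n]
    [DecidableEq n] {α : I → n → ℝ} (h : HasHermitianZeroSum 𝕜 α) (i : I) {V : Matrix n n 𝕜}
    (hV : V ∈ unitaryGroup n 𝕜) :
    ∃ U : I → Matrix n n 𝕜, (∀ j, U j ∈ unitaryGroup n 𝕜) ∧ U i = V ∧
      ∑ j, conjDiagonal (U j) (α j) = 0 := by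
  obtain ⟨U, hU, hsum⟩ := h
  refine ⟨fun j => V * star (U i) * U j,
    fun j => mul_mem (mul_mem hV (Unitary.star_mem (hU i))) (hU j), ?_, ?_⟩
  · simp only [Matrix.mul_assoc, mem_unitaryGroup_iff'.1 (hU i), Matrix.mul_one]
  · simp only [conjDiagonal_mul (V * star (U i))]
    rw [← Matrix.sum_mul, ← Matrix.mul_sum, hsum, Matrix.mul_zero, Matrix.zero_mul]

variable {I n : Type*}

/-- The spectra `ν` and `t i • a`, for `i : I`, as a single family; the index `none` carries `ν`. -/
def consScaledSpectra (ν a : n → ℝ) (t : I → ℝ) (o : Option I) : n → ℝ :=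
  o.elim ν fun i => t i • a

theorem antitone_consScaledSpectra [Preorder n] {ν a : n → ℝ} (hν : Antitone ν) (ha : Antitone a)
    {t : I → ℝ} (ht : ∀ i, 0 ≤ t i) : ∀ o, Antitone (consScaledSpectra ν a t o)
  | none => hν
  | some i => fun _ _ hxy => mul_le_mul_of_nonneg_left (ha hxy) (ht i)

theorem consScaledSpectra_combo (ν a : n → ℝ) (s t : I → ℝ) {p q : ℝ} (hpq : p + q = 1) :
    consScaledSpectra ν a (p • s + q • t) =
      p • consScaledSpectra ν a s + q • consScaledSpectra ν a t := by
  funext o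
  cases o with
  | none => exact (Convex.combo_self hpq ν).symm
  | some i => simp [consScaledSpectra, add_smul, mul_smul]

theorem consScaledSpectra_comp_optionCongr (ν a : n → ℝ) (t : I → ℝ) (σ : Equiv.Perm I) :
    consScaledSpectra ν a t ∘ Equiv.optionCongr σ = consScaledSpectra ν a (t ∘ σ) := by
  funext o
  cases o <;> rfl

variable [Fintype I] {d : ℕ} {ν a : Fin (d + 1) → ℝ}

theorem convex_setOf_hasHermitianZeroSum_consScaledSpectra (hν : Antitone ν) (ha : Antitone a) :
    Convex ℝ {t : I → ℝ | (∀ i, 0 ≤ t i) ∧ HasHermitianZeroSum ℂ (consScaledSpectra ν a t)} := by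
  rintro s ⟨hs, hs'⟩ t ⟨ht, ht'⟩ p q hp hq hpq
  refine ⟨fun i => add_nonneg (mul_nonneg hp (hs i)) (mul_nonneg hq (ht i)), ?_⟩
  rw [consScaledSpectra_combo ν a s t hpq]
  exact (convex_setOf_hasHermitianZeroSum ⟨antitone_consScaledSpectra hν ha hs, hs'⟩
    ⟨antitone_consScaledSpectra hν ha ht, ht'⟩ hp hq hpq).2

theorem HasHermitianZeroSum.consScaledSpectra_average [AddGroup I] (hν : Antitone ν)
    (ha : Antitone a) {t : I → ℝ} (ht : t ∈ stdSimplex ℝ I)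
    (h : HasHermitianZeroSum ℂ (consScaledSpectra ν a t)) :
    HasHermitianZeroSum ℂ (consScaledSpectra ν a fun _ : I => (Fintype.card I : ℝ)⁻¹) := by
  have haverage := const_average_mem_of_translates_mem
    (convex_setOf_hasHermitianZeroSum_consScaledSpectra hν ha) (t := t) fun k =>
      ⟨fun i => ht.1 (i + k), by
        have hperm := h.comp_equiv (Equiv.optionCongr (Equiv.addRight k))
        rwa [consScaledSpectra_comp_optionCongr] at hperm⟩
  simpa only [ht.2, mul_one] using haverage.2

theorem exists_sum_smul_conjDiagonal_eq_average [AddGroup I] (ha : Antitone a) {t : I → ℝ}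
    (ht : t ∈ stdSimplex ℝ I) {U : I → Matrix (Fin (d + 1)) (Fin (d + 1)) ℂ}
    (hU : ∀ i, U i ∈ unitaryGroup (Fin (d + 1)) ℂ) :
    ∃ V : I → Matrix (Fin (d + 1)) (Fin (d + 1)) ℂ, (∀ i, V i ∈ unitaryGroup (Fin (d + 1)) ℂ) ∧
      ∑ i, t i • conjDiagonal (U i) a = (Fintype.card I : ℝ)⁻¹ • ∑ i, conjDiagonal (V i) a := by
  have hherm : (-∑ i, t i • conjDiagonal (U i) a).IsHermitian := by
    simp only [← conjDiagonal_smul]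
    exact IsSelfAdjoint.neg (isSelfAdjoint_sum _ fun i _ => isHermitian_conjDiagonal (U i) _)
  obtain ⟨ν, hν, W, hW, hWν⟩ := exists_antitone_conjDiagonal_eq hherm
  have hzero : HasHermitianZeroSum ℂ (consScaledSpectra ν a t) := by
    refine ⟨fun o => o.elim W U, Option.rec hW hU, ?_⟩
    simp only [Fintype.sum_option, consScaledSpectra, Option.elim, conjDiagonal_smul, hWν,
      neg_add_cancel]
  obtain ⟨V, hV, hVW, hsum⟩ :=
    (hzero.consScaledSpectra_average hν ha ht).exists_apply_eq none hW
  refine ⟨fun i => V (some i), fun i => hV (some i), ?_⟩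
  simpa only [Fintype.sum_option, consScaledSpectra, Option.elim, conjDiagonal_smul, hVW, hWν,
    ← Finset.smul_sum, neg_add_eq_zero] using hsum

end Averaging

section PartialConvexHull

theorem convexHull_range_eq_image_stdSimplex {𝕜 I E : Type*} [Field 𝕜] [LinearOrder 𝕜]
    [IsStrictOrderedRing 𝕜] [Fintype I] [AddCommGroup E] [Module 𝕜 E]
    (f : I → E) : convexHull 𝕜 (Set.range f) = (fun t => ∑ i, t i • f i) '' stdSimplex 𝕜 I := by
  classical
  have h := (Fintype.linearCombination 𝕜 f).image_convexHull
    (Set.range fun i : I => (Pi.single i 1 : I → 𝕜))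
  rw [convexHull_rangle_single_eq_stdSimplex, ← Set.range_comp] at h
  simpa [Function.comp_def, Set.image, Fintype.linearCombination_apply] using h.symm

open scoped Pointwise

theorem convex_smul_set_iff {𝕜 E : Type*} [Field 𝕜] [PartialOrder 𝕜] [AddCommMonoid E]
    [Module 𝕜 E] {c : 𝕜} (hc : c ≠ 0) {s : Set E} : Convex 𝕜 (c • s) ↔ Convex 𝕜 s :=
  ⟨fun h => inv_smul_smul₀ hc s ▸ h.smul c⁻¹, fun h => h.smul c⟩

theorem partialConvexHull_coadjointOrbit {d r : ℕ} [NeZero r] {lam : Fin (d + 1) → ℝ}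
    (hmono : Antitone lam) (hsum : ∑ i, lam i = 0) :
    partialConvexHull r (coadjointOrbit lam) =
      (r : ℝ)⁻¹ • {B : Matrix (Fin (d + 1)) (Fin (d + 1)) ℂ |
        ∃ A : Fin r → Matrix (Fin (d + 1)) (Fin (d + 1)) ℂ,
          (∀ i, A i ∈ coadjointOrbit lam) ∧ B = ∑ i, A i} := by
  ext X
  simp only [partialConvexHull, convexHull_range_eq_image_stdSimplex, Set.mem_smul_set]
  constructor
  · rintro ⟨A, hA, t, ht, rfl⟩
    choose U hU hUA using fun i => (mem_coadjointOrbit_iff hsum).1 (hA i)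
    obtain ⟨V, hV, hVU⟩ := exists_sum_smul_conjDiagonal_eq_average hmono ht hU
    refine ⟨_, ⟨fun i => conjDiagonal (V i) lam,
      fun i => (mem_coadjointOrbit_iff hsum).2 ⟨V i, hV i, rfl⟩, rfl⟩, ?_⟩
    simpa only [hUA, Fintype.card_fin] using hVU.symm
  · rintro ⟨_, ⟨A, hA, rfl⟩, rfl⟩
    refine ⟨A, hA, fun _ => (r : ℝ)⁻¹, ⟨fun _ => by positivity, ?_⟩, Finset.smul_sum.symm⟩
    simp [NeZero.ne r]

end PartialConvexHull

/-- `C_r(O_λ)` is convex iff the `r`-fold Minkowski sum `O_λ + … + O_λ` is convex. -/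
theorem partialConvexHull_convex_iff_sum_convex (n : ℕ) (hn : 2 ≤ n)
    (lam : Fin n → ℝ) (hmono : Antitone lam) (hsum : ∑ i, lam i = 0)
    (r : ℕ) (hr : 1 ≤ r) :
    Convex ℝ (partialConvexHull r (coadjointOrbit lam)) ↔
      Convex ℝ {B : Matrix (Fin n) (Fin n) ℂ |
        ∃ A : Fin r → Matrix (Fin n) (Fin n) ℂ,
          (∀ i, A i ∈ coadjointOrbit lam) ∧ B = ∑ i, A i} := by
  obtain ⟨d, rfl⟩ : ∃ d, n = d + 1 := ⟨n - 1, by omega⟩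
  have : NeZero r := ⟨by omega⟩
  rw [partialConvexHull_coadjointOrbit hmono hsum,
    convex_smul_set_iff (inv_ne_zero (NeZero.ne (r : ℝ)))]
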